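/- arXiv:1910.14371 — 3 statements merged into one kernel-verified Lean document; each statement's English description precedes it below -/
import Mathlib

section
/- Assume hypothesis (H). Let c > 0 and ψ ∈ W^{2,∞}(𝕋) satisfy the front equation −c + R(y)·K(u(ψ(y),y))·√(1+ψ'(y)²) = ψ''(y)/(1+ψ'(y)²) for almost every y ∈ 𝕋, where u is a nonnegative classical solution of the temperature problem for (c,ψ). Then c ≥ R_m · ∫₀¹ K(s) ds. -/
/-!
The front equation divided by `√(1 + ψ'²)` reads
`R K(u) = c / √(1 + ψ'²) + (ψ' / √(1 + ψ'²))'`; integrating over a period gives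
`Rm ∫ K(u(ψ(y),y)) dy ≤ c` (`integral_curvature`). It remains to prove
`∫₀¹ K(s) ds ≤ ∫₀¹ K(u(ψ(y),y)) dy`.

For a `C¹` nondecreasing `k` with primitive `𝒦`, the field `k(u)∇u - c 𝒦(u) e₁` has divergence
`k'(u)|∇u|² ≥ 0`, so its flux through `{x = s + ψ(y)}` is nondecreasing in `s ≤ 0`
(`monotoneOn_flux`). Because the energy is finite and `u → 0`, the flux at `s = 0` is nonnegative
(`flux_nonneg`); by the Neumann condition this says `∫ 𝒦(u) dy ≤ ∫ k(u) dy` on the front.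
Replacing `k` by `k - k(1)` makes `𝒦` minimal at `1`, whence `∫₀¹ k ≤ ∫ k(u) dy`
(`integral_le_of_smooth`). A continuous `K` is handled by averaging
(`integral_le_of_continuous`).
-/

open MeasureTheory Set Filter
open scoped NNReal

noncomputable section

/-- The open fresh region `Ω_ψ = {(x,y) : x < ψ(y)}`.  Functions on the torus `𝕋 = ℝ/ℤ`
are identified with 1-periodic functions on `ℝ`, so `Ω_ψ ⊆ ℝ × ℝ`. -/
def Omega (ψ : ℝ → ℝ) : Set (ℝ × ℝ) := {p | p.1 < ψ p.2}

/-- The closure of `Ω_ψ`, i.e. `{(x,y) : x ≤ ψ(y)}`. -/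
def OmegaCl (ψ : ℝ → ℝ) : Set (ℝ × ℝ) := {p | p.1 ≤ ψ p.2}

/-- Partial derivative in the `x`-direction. -/
def pdx (u : ℝ × ℝ → ℝ) (p : ℝ × ℝ) : ℝ := fderiv ℝ u p (1, 0)

/-- Partial derivative in the `y`-direction. -/
def pdy (u : ℝ × ℝ → ℝ) (p : ℝ × ℝ) : ℝ := fderiv ℝ u p (0, 1)

/-- Laplacian. -/
def lap (u : ℝ × ℝ → ℝ) (p : ℝ × ℝ) : ℝ := pdx (pdx u) p + pdy (pdy u) p

/-- `ψ ∈ W^{2,∞}(𝕋)`: a 1-periodic `C¹` function with Lipschitz derivative;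
its a.e. second derivative is `deriv (deriv ψ)`. -/
structure W2infPer (ψ : ℝ → ℝ) : Prop where
  periodic : Function.Periodic ψ 1
  contDiff : ContDiff ℝ 1 ψ
  lipDeriv : ∃ L : ℝ≥0, LipschitzWith L (deriv ψ)

/-- A classical solution `u` of the temperature problem for `(c, ψ)`:
1-periodic in `y`, continuous on the closure of `Ω_ψ`, `C²` inside, `C¹` up to the
boundary, with finite energy `∫_{Ω_ψ} (u² + |∇u|²) < ∞` (one period in `y`),
satisfying `c uₓ - Δu = 0` in `Ω_ψ`, the Neumann condition
`∂u/∂ν = c/√(1+ψ'²)` on `{x = ψ(y)}` (where `ν = (1, -ψ')/√(1+ψ'²)`),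
and `u → 0` uniformly in `y` as `x → -∞`. -/
structure IsTempSol (c : ℝ) (ψ : ℝ → ℝ) (u : ℝ × ℝ → ℝ) : Prop where
  periodic : ∀ x y : ℝ, u (x, y + 1) = u (x, y)
  contOn : ContinuousOn u (OmegaCl ψ)
  c2 : ContDiffOn ℝ 2 u (Omega ψ)
  c1 : ContDiffOn ℝ 1 u (OmegaCl ψ)
  pde : ∀ p ∈ Omega ψ, c * pdx u p - lap u p = 0
  bc : ∀ y : ℝ,
    fderivWithin ℝ u (OmegaCl ψ) (ψ y, y) (1, -deriv ψ y) / Real.sqrt (1 + deriv ψ y ^ 2)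
      = c / Real.sqrt (1 + deriv ψ y ^ 2)
  energy : IntegrableOn (fun p => u p ^ 2 + ‖fderiv ℝ u p‖ ^ 2)
      (Omega ψ ∩ {p : ℝ × ℝ | p.2 ∈ Ico (0 : ℝ) 1})
  decay : ∀ ε > 0, ∃ X : ℝ, ∀ p ∈ OmegaCl ψ, p.1 ≤ X → |u p| ≤ ε

/-! ### Integrals over a period depending on a parameter -/

lemma hasDerivAt_integral_param {f f' : ℝ → ℝ → ℝ} {s₀ : ℝ} (hs₀ : s₀ < 0)
    (hf : ∀ s < 0, ∀ y, HasDerivAt (fun s => f s y) (f' s y) s)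
    (hfc : ∀ s < 0, Continuous (f s))
    (hf' : ContinuousOn (fun p : ℝ × ℝ => f' p.1 p.2) (Iio 0 ×ˢ univ)) :
    HasDerivAt (fun s => ∫ y in (0:ℝ)..1, f s y) (∫ y in (0:ℝ)..1, f' s₀ y) s₀ := by
  have hsub : Icc (2 * s₀) (s₀ / 2) ×ˢ Icc (0:ℝ) 1 ⊆ Iio (0:ℝ) ×ˢ (univ : Set ℝ) := by
    rintro ⟨s, y⟩ ⟨hs, -⟩
    exact ⟨lt_of_le_of_lt hs.2 (by linarith), mem_univ _⟩
  obtain ⟨C, hC⟩ := (isCompact_Icc.prod isCompact_Icc).exists_bound_of_continuousOn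
    (hf'.mono hsub)
  have hnhds : Icc (2 * s₀) (s₀ / 2) ∈ nhds s₀ := Icc_mem_nhds (by linarith) (by linarith)
  have hf's : Continuous (f' s₀) := by
    have : ContinuousOn (fun y : ℝ => f' s₀ y) univ :=
      hf'.comp (f := fun y : ℝ => (s₀, y)) (by fun_prop) (fun y _ => ⟨hs₀, mem_univ _⟩)
    exact continuousOn_univ.mp this
  refine (intervalIntegral.hasDerivAt_integral_of_dominated_loc_of_deriv_le (bound := fun _ => C)
    hnhds ?_ ((hfc s₀ hs₀).intervalIntegrable _ _) hf's.aestronglyMeasurable ?_ (by simp) ?_).2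
  · filter_upwards [Iio_mem_nhds hs₀] with s hs
    exact (hfc s hs).aestronglyMeasurable
  · refine ae_of_all _ fun y hy s hs => hC (s, y) ⟨hs, ?_⟩
    rw [uIoc_of_le zero_le_one] at hy
    exact Ioc_subset_Icc_self hy
  · exact ae_of_all _ fun y _ s hs => hf s (lt_of_le_of_lt hs.2 (by linarith)) y

lemma continuousOn_integral_param {f : ℝ → ℝ → ℝ}
    (hf : ContinuousOn (fun p : ℝ × ℝ => f p.1 p.2) (Iic 0 ×ˢ univ)) :
    ContinuousOn (fun s => ∫ y in (0:ℝ)..1, f s y) (Iic 0) := by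
  have h1 : Continuous (fun p : ℝ × ℝ => f (min p.1 0) p.2) := by
    have := hf.comp (s := univ) (f := fun p : ℝ × ℝ => (min p.1 0, p.2)) (by fun_prop)
      (fun p _ => ⟨mem_Iic.mpr (min_le_right _ _), mem_univ _⟩)
    exact continuousOn_univ.mp this
  have h2 : Continuous (fun s => ∫ y in (0:ℝ)..1, f (min s 0) y) :=
    intervalIntegral.continuous_parametric_intervalIntegral_of_continuous' (f := fun s y => f (min s 0) y) h1 0 1
  refine h2.continuousOn.congr fun s hs => ?_
  simp only [min_eq_left (mem_Iic.mp hs)]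

/-! ### The region and the curves `{x = s + ψ(y)}` -/

lemma isOpen_Omega {ψ : ℝ → ℝ} (hψ : Continuous ψ) : IsOpen (Omega ψ) :=
  isOpen_lt continuous_fst (hψ.comp continuous_snd)

/-- `OmegaCl ψ` is the image of the half-plane `{s ≤ 0}` under the `C¹` shear
`(s, y) ↦ (s + ψ y, y)`, whose differential is onto at every point. -/
lemma uniqueDiffOn_OmegaCl {ψ : ℝ → ℝ} (hψ : ContDiff ℝ 1 ψ) :
    UniqueDiffOn ℝ (OmegaCl ψ) := by
  have himg : (fun p : ℝ × ℝ => (p.1 + ψ p.2, p.2)) '' (Iic 0 ×ˢ univ) = OmegaCl ψ := by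
    ext ⟨x, y⟩
    constructor
    · rintro ⟨⟨s, z⟩, ⟨hs, -⟩, h⟩
      simp only [Prod.mk.injEq] at h
      obtain ⟨rfl, rfl⟩ := h
      have : s ≤ 0 := hs
      simpa [OmegaCl] using this
    · intro h
      have h' : x ≤ ψ y := h
      exact ⟨(x - ψ y, y), ⟨by simpa using h', mem_univ _⟩, by simp⟩
  have hhalf : UniqueDiffOn ℝ (Iic (0:ℝ) ×ˢ (univ : Set ℝ)) :=
    (uniqueDiffOn_Iic 0).prod uniqueDiffOn_univ
  rw [← himg]
  refine hhalf.image (f' := fun p =>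
    (ContinuousLinearMap.fst ℝ ℝ ℝ + (fderiv ℝ ψ p.2).comp (ContinuousLinearMap.snd ℝ ℝ ℝ)).prod
      (ContinuousLinearMap.snd ℝ ℝ ℝ)) (fun p _ => ?_) (fun p _ => ?_)
  · have h1 : HasFDerivAt (fun p : ℝ × ℝ => ψ p.2)
        ((fderiv ℝ ψ p.2).comp (ContinuousLinearMap.snd ℝ ℝ ℝ)) p :=
      ((hψ.differentiable one_ne_zero p.2).hasFDerivAt).comp p hasFDerivAt_snd
    exact ((hasFDerivAt_fst.add h1).prodMk hasFDerivAt_snd).hasFDerivWithinAt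
  · refine Function.Surjective.denseRange fun q => ⟨(q.1 - fderiv ℝ ψ p.2 q.2, q.2), ?_⟩
    ext <;> simp

lemma hasDerivAt_shear_left {ψ : ℝ → ℝ} (hψ : Continuous ψ) {g : ℝ × ℝ → ℝ}
    (hg : DifferentiableOn ℝ g (Omega ψ)) {s : ℝ} (hs : s < 0) (y : ℝ) :
    HasDerivAt (fun s => g (s + ψ y, y)) (pdx g (s + ψ y, y)) s := by
  have hmem : (s + ψ y, y) ∈ Omega ψ := by simpa [Omega] using hs
  have h := (hg.differentiableAt ((isOpen_Omega hψ).mem_nhds hmem)).hasFDerivAt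
  have h1 : HasDerivAt (fun s : ℝ => (s + ψ y, y)) ((1:ℝ), (0:ℝ)) s :=
    ((hasDerivAt_id s).add_const _).prodMk (hasDerivAt_const s y)
  exact h.comp_hasDerivAt s h1

lemma hasDerivAt_shear_right {ψ : ℝ → ℝ} (hψ : ContDiff ℝ 1 ψ) {g : ℝ × ℝ → ℝ}
    (hg : DifferentiableOn ℝ g (Omega ψ)) {s : ℝ} (hs : s < 0) (y : ℝ) :
    HasDerivAt (fun y => g (s + ψ y, y))
      (deriv ψ y * pdx g (s + ψ y, y) + pdy g (s + ψ y, y)) y := by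
  have hmem : (s + ψ y, y) ∈ Omega ψ := by simpa [Omega] using hs
  have h := (hg.differentiableAt ((isOpen_Omega hψ.continuous).mem_nhds hmem)).hasFDerivAt
  have h1 : HasDerivAt (fun y : ℝ => (s + ψ y, y)) (deriv ψ y, (1:ℝ)) y :=
    (((hψ.differentiable one_ne_zero y).hasDerivAt).const_add s).prodMk (hasDerivAt_id y)
  have h2 := HasFDerivAt.comp_hasDerivAt (f := fun y : ℝ => (s + ψ y, y)) y h h1
  have h3 : ((deriv ψ y, 1) : ℝ × ℝ) = deriv ψ y • (1, 0) + (0, 1) := by simp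
  rw [h3, map_add, map_smul] at h2
  exact h2

lemma integrableOn_shear {ψ : ℝ → ℝ} (hψ : Continuous ψ) {E : ℝ × ℝ → ℝ}
    (hE : IntegrableOn E (Omega ψ ∩ {p : ℝ × ℝ | p.2 ∈ Ico (0 : ℝ) 1})) :
    IntegrableOn (fun s => ∫ y in Ico (0:ℝ) 1, E (s + ψ y, y)) (Iio 0) := by
  have h1 : MeasurePreserving (fun p : ℝ × ℝ => (p.1, p.2 + ψ p.1))
      ((volume : Measure ℝ).prod volume) ((volume : Measure ℝ).prod volume) :=
    MeasurePreserving.skew_product (g := fun y s : ℝ => s + ψ y) (MeasurePreserving.id volume)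
      (by fun_prop) (ae_of_all _ fun y => (measurePreserving_add_right volume (ψ y)).map_eq)
  have h2 : MeasurePreserving (fun p : ℝ × ℝ => (p.1 + ψ p.2, p.2))
      ((volume : Measure ℝ).prod volume) ((volume : Measure ℝ).prod volume) :=
    (Measure.measurePreserving_swap.comp h1).comp Measure.measurePreserving_swap
  have hmeas : MeasurableSet (Omega ψ ∩ {p : ℝ × ℝ | p.2 ∈ Ico (0 : ℝ) 1}) :=
    (isOpen_Omega hψ).measurableSet.inter (measurable_snd measurableSet_Ico)
  have h3 := h2.restrict_preimage hmeas
  have hpre : (fun p : ℝ × ℝ => (p.1 + ψ p.2, p.2)) ⁻¹'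
      (Omega ψ ∩ {p : ℝ × ℝ | p.2 ∈ Ico (0 : ℝ) 1}) = Iio 0 ×ˢ Ico 0 1 := by
    ext ⟨s, y⟩
    simp [Omega]
  rw [hpre, ← Measure.prod_restrict] at h3
  have h4 := h3.integrable_comp_of_integrable (g := E) hE
  exact h4.integral_prod_left

/-! ### The flux of `k(u)∇u - c 𝒦(u) e₁` -/

/-- The integrand, on the curve `{x = s + ψ(y)}`, of the flux of `k(u)∇u - c 𝒦(u) e₁`, with
respect to `dy`; `P` is the primitive `𝒦` of `k`. The gradient is taken within the closed region, so that `s = 0` is allowed. -/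
def fluxDensity (c : ℝ) (ψ : ℝ → ℝ) (u : ℝ × ℝ → ℝ) (k P : ℝ → ℝ) (s y : ℝ) : ℝ :=
  k (u (s + ψ y, y)) * fderivWithin ℝ u (OmegaCl ψ) (s + ψ y, y) (1, -deriv ψ y)
    - c * P (u (s + ψ y, y))

lemma fderivWithin_eq {ψ : ℝ → ℝ} (hψ : Continuous ψ) (u : ℝ × ℝ → ℝ) {s : ℝ} (hs : s < 0)
    (y : ℝ) : fderivWithin ℝ u (OmegaCl ψ) (s + ψ y, y) = fderiv ℝ u (s + ψ y, y) := by
  have hmem : (s + ψ y, y) ∈ Omega ψ := by simpa [Omega] using hs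
  refine fderivWithin_of_mem_nhds (mem_of_superset ((isOpen_Omega hψ).mem_nhds hmem) ?_)
  intro p hp
  have : p.1 < ψ p.2 := hp
  exact this.le

lemma continuousOn_fluxDensity {c : ℝ} {ψ : ℝ → ℝ} {u : ℝ × ℝ → ℝ} {k P : ℝ → ℝ}
    (hψ : W2infPer ψ) (hu : IsTempSol c ψ u) (hk : Continuous k) (hP : Continuous P) :
    ContinuousOn (fun p : ℝ × ℝ => fluxDensity c ψ u k P p.1 p.2) (Iic 0 ×ˢ univ) := by
  have hψc := hψ.contDiff.continuous
  have hψ' : Continuous (deriv ψ) := hψ.contDiff.continuous_deriv le_rfl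
  have hmap : MapsTo (fun p : ℝ × ℝ => (p.1 + ψ p.2, p.2)) (Iic 0 ×ˢ univ) (OmegaCl ψ) := by
    rintro ⟨s, y⟩ ⟨hs, -⟩
    have : s ≤ 0 := hs
    simpa [OmegaCl] using this
  have hsh : ContinuousOn (fun p : ℝ × ℝ => (p.1 + ψ p.2, p.2)) (Iic 0 ×ˢ univ) := by fun_prop
  have h1 := hu.contOn.comp hsh hmap
  have h2 := (hu.c1.continuousOn_fderivWithin (uniqueDiffOn_OmegaCl hψ.contDiff) le_rfl).comp
    hsh hmap
  have h3 : ContinuousOn (fun p : ℝ × ℝ => ((1:ℝ), -deriv ψ p.2)) (Iic 0 ×ˢ univ) := by fun_prop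
  exact ((hk.comp_continuousOn h1).mul (h2.clm_apply h3)).sub
    (continuousOn_const.mul (hP.comp_continuousOn h1))

/-- The divergence of `k(u)∇u - c 𝒦(u) e₁` is `k'(u)|∇u|² ≥ 0`, so its flux through the curves
`{x = s + ψ(y)}` increases with `s`. The tangential part of the derivative of the flux integrates
to zero by periodicity, and no second derivative of `ψ` is involved. -/
lemma monotoneOn_flux {c : ℝ} {ψ : ℝ → ℝ} {u : ℝ × ℝ → ℝ} {k k' P : ℝ → ℝ}
    (hψ : W2infPer ψ) (hu : IsTempSol c ψ u)
    (hP : ∀ t, HasDerivAt P (k t) t) (hk : ∀ t, HasDerivAt k (k' t) t)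
    (hk'c : Continuous k') (hk'0 : ∀ t, 0 ≤ k' t) :
    MonotoneOn (fun s => ∫ y in (0:ℝ)..1, fluxDensity c ψ u k P s y) (Iic 0) := by
  have hkc : Continuous k := continuous_iff_continuousAt.mpr fun t => (hk t).continuousAt
  have hPc : Continuous P := continuous_iff_continuousAt.mpr fun t => (hP t).continuousAt
  have hψc := hψ.contDiff.continuous
  have hψ' : Continuous (deriv ψ) := hψ.contDiff.continuous_deriv le_rfl
  have hO := isOpen_Omega hψc
  have hDu : ContDiffOn ℝ 1 (fderiv ℝ u) (Omega ψ) := hu.c2.fderiv_of_isOpen hO (by norm_num)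
  have hp1 : ContDiffOn ℝ 1 (pdx u) (Omega ψ) := hDu.clm_apply contDiffOn_const
  have hq1 : ContDiffOn ℝ 1 (pdy u) (Omega ψ) := hDu.clm_apply contDiffOn_const
  have hud : DifferentiableOn ℝ u (Omega ψ) := hu.c2.differentiableOn (by norm_num)
  have hpd := hp1.differentiableOn one_ne_zero
  have hqd := hq1.differentiableOn one_ne_zero
  have hpc := hp1.continuousOn
  have hqc := hq1.continuousOn
  have hDp := hp1.continuousOn_fderiv_of_isOpen hO le_rfl
  have hDq := hq1.continuousOn_fderiv_of_isOpen hO le_rfl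
  have hpx : ContinuousOn (pdx (pdx u)) (Omega ψ) := hDp.clm_apply continuousOn_const
  have hqx : ContinuousOn (pdx (pdy u)) (Omega ψ) := hDq.clm_apply continuousOn_const
  have hqy : ContinuousOn (pdy (pdy u)) (Omega ψ) := hDq.clm_apply continuousOn_const
  have hmap : MapsTo (fun p : ℝ × ℝ => (p.1 + ψ p.2, p.2)) (Iio 0 ×ˢ univ) (Omega ψ) := by
    rintro ⟨s, y⟩ ⟨hs, -⟩
    have : s < 0 := hs
    simpa [Omega] using this
  have hsh : ContinuousOn (fun p : ℝ × ℝ => (p.1 + ψ p.2, p.2)) (Iio 0 ×ˢ univ) := by fun_prop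
  have hmap' : ∀ s < 0, MapsTo (fun y : ℝ => (s + ψ y, y)) univ (Omega ψ) := by
    intro s hs y _
    simpa [Omega] using hs
  have hsh' : ∀ s : ℝ, ContinuousOn (fun y : ℝ => (s + ψ y, y)) univ := fun s => by fun_prop
  -- the flux density in the open region, and its derivative in `s`
  set g : ℝ → ℝ → ℝ := fun s y =>
    k (u (s + ψ y, y)) * (pdx u (s + ψ y, y) - deriv ψ y * pdy u (s + ψ y, y))
      - c * P (u (s + ψ y, y)) with hg
  set g' : ℝ → ℝ → ℝ := fun s y =>
    k' (u (s + ψ y, y)) * pdx u (s + ψ y, y)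
        * (pdx u (s + ψ y, y) - deriv ψ y * pdy u (s + ψ y, y))
      + k (u (s + ψ y, y)) * (pdx (pdx u) (s + ψ y, y) - deriv ψ y * pdx (pdy u) (s + ψ y, y))
      - c * (k (u (s + ψ y, y)) * pdx u (s + ψ y, y)) with hg'
  have hFg : ∀ s < 0, ∀ y, fluxDensity c ψ u k P s y = g s y := by
    intro s hs y
    have h3 : ((1, -deriv ψ y) : ℝ × ℝ) = (1, 0) - deriv ψ y • (0, 1) := by simp
    simp only [fluxDensity, hg]
    rw [fderivWithin_eq hψc u hs, h3, map_sub, map_smul]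
    rfl
  have hgd : ∀ s < 0, ∀ y, HasDerivAt (fun s => g s y) (g' s y) s := by
    intro s hs y
    have hu1 := hasDerivAt_shear_left hψc hud hs y
    have hp2 := hasDerivAt_shear_left hψc hpd hs y
    have hq2 := hasDerivAt_shear_left hψc hqd hs y
    have hk2 := (hk (u (s + ψ y, y))).comp s hu1
    have hP2 := (hP (u (s + ψ y, y))).comp s hu1
    exact (hk2.mul (hp2.sub (hq2.const_mul (deriv ψ y)))).sub (hP2.const_mul c)
  have hg'c : ContinuousOn (fun p : ℝ × ℝ => g' p.1 p.2) (Iio 0 ×ˢ univ) := by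
    have a0 := hu.c2.continuousOn.comp hsh hmap
    have a1 := hpc.comp hsh hmap
    have a2 := hqc.comp hsh hmap
    have a3 := hpx.comp hsh hmap
    have a4 := hqx.comp hsh hmap
    have a5 : ContinuousOn (fun p : ℝ × ℝ => deriv ψ p.2) (Iio 0 ×ˢ univ) := by fun_prop
    have a6 := hk'c.comp_continuousOn a0
    have a7 := hkc.comp_continuousOn a0
    exact (((a6.mul a1).mul (a1.sub (a5.mul a2))).add (a7.mul (a3.sub (a5.mul a4)))).sub
      (continuousOn_const.mul (a7.mul a1))
  have hgc : ∀ s < 0, Continuous (g s) := by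
    intro s hs
    have a0 := hu.c2.continuousOn.comp (hsh' s) (hmap' s hs)
    have a1 := hpc.comp (hsh' s) (hmap' s hs)
    have a2 := hqc.comp (hsh' s) (hmap' s hs)
    have : ContinuousOn (g s) univ :=
      ((hkc.comp_continuousOn a0).mul (a1.sub (hψ'.continuousOn.mul a2))).sub
        (continuousOn_const.mul (hPc.comp_continuousOn a0))
    exact continuousOn_univ.mp this
  have hderiv : ∀ s < 0, HasDerivAt (fun s => ∫ y in (0:ℝ)..1, fluxDensity c ψ u k P s y)
      (∫ y in (0:ℝ)..1, g' s y) s := by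
    intro s hs
    refine (hasDerivAt_integral_param hs hgd hgc hg'c).congr_of_eventuallyEq ?_
    filter_upwards [Iio_mem_nhds hs] with t ht
    exact intervalIntegral.integral_congr fun y _ => hFg t ht y
  have hnonneg : ∀ s < 0, 0 ≤ ∫ y in (0:ℝ)..1, g' s y := by
    intro s hs
    -- `d` is the derivative in `y` of `k(u) u_y` along the curve
    set d : ℝ → ℝ := fun y =>
      k' (u (s + ψ y, y)) * (deriv ψ y * pdx u (s + ψ y, y) + pdy u (s + ψ y, y))
          * pdy u (s + ψ y, y)
        + k (u (s + ψ y, y))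
          * (deriv ψ y * pdx (pdy u) (s + ψ y, y) + pdy (pdy u) (s + ψ y, y)) with hd
    have hdd : ∀ y, HasDerivAt (fun y => k (u (s + ψ y, y)) * pdy u (s + ψ y, y)) (d y) y := by
      intro y
      have hu1 := hasDerivAt_shear_right hψ.contDiff hud hs y
      have hq2 := hasDerivAt_shear_right hψ.contDiff hqd hs y
      have hk2 := HasDerivAt.comp (h₂ := k) (h := fun y => u (s + ψ y, y)) y
        (hk (u (s + ψ y, y))) hu1
      exact hk2.mul hq2
    have a0 := hu.c2.continuousOn.comp (hsh' s) (hmap' s hs)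
    have a1 := hpc.comp (hsh' s) (hmap' s hs)
    have a2 := hqc.comp (hsh' s) (hmap' s hs)
    have a4 := hqx.comp (hsh' s) (hmap' s hs)
    have a8 := hqy.comp (hsh' s) (hmap' s hs)
    have a6 := hk'c.comp_continuousOn a0
    have a7 := hkc.comp_continuousOn a0
    have hdc : Continuous d := by
      have : ContinuousOn d univ :=
        ((a6.mul ((hψ'.continuousOn.mul a1).add a2)).mul a2).add
          (a7.mul ((hψ'.continuousOn.mul a4).add a8))
      exact continuousOn_univ.mp this
    have hg'sc : Continuous (g' s) := by
      have : ContinuousOn (g' s) univ :=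
        hg'c.comp (f := fun y : ℝ => (s, y)) (by fun_prop) (fun y _ => ⟨hs, mem_univ _⟩)
      exact continuousOn_univ.mp this
    have hperψ : ψ 1 = ψ 0 := by simpa using hψ.periodic 0
    have hperu : u (s + ψ 1, 1) = u (s + ψ 0, 0) := by
      rw [hperψ]; simpa using hu.periodic (s + ψ 0) 0
    have hperq : pdy u (s + ψ 1, 1) = pdy u (s + ψ 0, 0) := by
      have hfun : (fun p : ℝ × ℝ => u (p + (0, 1))) = u := by
        funext ⟨x, y⟩
        simpa using hu.periodic x y
      have := fderiv_comp_add_right (𝕜 := ℝ) (f := u) (x := (s + ψ 0, 0)) ((0, 1) : ℝ × ℝ)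
      rw [hfun] at this
      simp only [pdy, hperψ]
      rw [this]; simp
    have hd0 : ∫ y in (0:ℝ)..1, d y = 0 := by
      rw [intervalIntegral.integral_eq_sub_of_hasDerivAt (fun y _ => hdd y)
        (hdc.intervalIntegrable _ _), hperu, hperq, sub_self]
    have hsum : ∫ y in (0:ℝ)..1, g' s y = ∫ y in (0:ℝ)..1, (g' s y + d y) := by
      rw [intervalIntegral.integral_add (hg'sc.intervalIntegrable _ _)
        (hdc.intervalIntegrable _ _), hd0, add_zero]
    rw [hsum]
    refine intervalIntegral.integral_nonneg zero_le_one fun y _ => ?_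
    have hpde := hu.pde (s + ψ y, y) (hmap' s hs (mem_univ y))
    have heq : g' s y + d y = k' (u (s + ψ y, y)) *
        (pdx u (s + ψ y, y) ^ 2 + pdy u (s + ψ y, y) ^ 2) := by
      simp only [lap] at hpde
      simp only [hg', hd]
      linear_combination (-k (u (s + ψ y, y))) * hpde
    rw [heq]
    exact mul_nonneg (hk'0 _) (by positivity)
  refine monotoneOn_of_deriv_nonneg (convex_Iic 0)
    (continuousOn_integral_param (continuousOn_fluxDensity hψ hu hkc hPc)) ?_ ?_
  · rw [interior_Iic]
    exact fun s hs => (hderiv s hs).differentiableAt.differentiableWithinAt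
  · rw [interior_Iic]
    intro s hs
    rw [(hderiv s hs).deriv]
    exact hnonneg s hs

/-- A flux that increases with `s` cannot be negative at the front: it would stay below a negative
constant as `s → -∞`, which by Young's inequality bounds `∫ |∇u|² dy` from below on all far left
curves and contradicts the finiteness of the energy. -/
lemma flux_nonneg {c : ℝ} {ψ : ℝ → ℝ} {u : ℝ × ℝ → ℝ} {k P : ℝ → ℝ}
    (hψ : W2infPer ψ) (hu : IsTempSol c ψ u)
    (hkc : Continuous k) (hPc : Continuous P) (hP0 : P 0 = 0)
    (hmono : MonotoneOn (fun s => ∫ y in (0:ℝ)..1, fluxDensity c ψ u k P s y) (Iic 0)) :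
    0 ≤ ∫ y in (0:ℝ)..1, fluxDensity c ψ u k P 0 y := by
  have hψc := hψ.contDiff.continuous
  have hψ' : Continuous (deriv ψ) := hψ.contDiff.continuous_deriv le_rfl
  by_contra! hneg
  set δ := -∫ y in (0:ℝ)..1, fluxDensity c ψ u k P 0 y with hδ
  have hδ0 : 0 < δ := by linarith
  obtain ⟨L, hL⟩ := isCompact_Icc.exists_bound_of_continuousOn
    (hψ'.continuousOn (s := Icc (0:ℝ) 1))
  obtain ⟨A, hA⟩ := isCompact_Icc.exists_bound_of_continuousOn
    (hψc.continuousOn (s := Icc (0:ℝ) 1))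
  set B := |k 0| + 1 with hB
  have hB0 : 0 < B := by positivity
  have hL0 : 0 ≤ L := (norm_nonneg _).trans (hL 0 (by simp))
  have hk1 : ∀ᶠ t in nhds (0:ℝ), |k t| < B :=
    (hkc.abs.tendsto 0).eventually_lt_const (by simp [hB])
  have hP1 : ∀ᶠ t in nhds (0:ℝ), |c * P t| < δ / 2 := by
    have : Continuous fun t => |c * P t| := by fun_prop
    refine (this.tendsto 0).eventually_lt_const ?_
    simpa [hP0] using hδ0
  obtain ⟨ε, hε, hkP⟩ := Metric.eventually_nhds_iff.mp (hk1.and hP1)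
  obtain ⟨X, hX⟩ := hu.decay (ε / 2) (by linarith)
  set M := B * (1 + L) with hM
  have hM0 : 0 < M := by positivity
  set S := min (-1) (X - A) with hS
  set E : ℝ × ℝ → ℝ := fun p => u p ^ 2 + ‖fderiv ℝ u p‖ ^ 2 with hE
  have hpt : ∀ s < S, ∀ y ∈ Icc (0:ℝ) 1,
      -fluxDensity c ψ u k P s y ≤ 3 * δ / 4 + M ^ 2 / δ * E (s + ψ y, y) := by
    intro s hs y hy
    have hs0 : s < 0 := by have := min_le_left (-1) (X - A); linarith
    have hsX : s + ψ y ≤ X := by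
      have h1 := min_le_right (-1) (X - A)
      have h2 := (le_abs_self _).trans (hA y hy)
      linarith
    have hmem : (s + ψ y, y) ∈ OmegaCl ψ := by simpa [OmegaCl] using hs0.le
    have hu1 := hX _ hmem hsX
    obtain ⟨h1, h2⟩ := hkP (y := u (s + ψ y, y)) (by rw [Real.dist_eq, sub_zero]; linarith)
    set N := ‖fderiv ℝ u (s + ψ y, y)‖ with hN
    have hN0 : 0 ≤ N := norm_nonneg _
    have h3 : |fderiv ℝ u (s + ψ y, y) (1, -deriv ψ y)| ≤ N * (1 + L) := by
      rw [← Real.norm_eq_abs]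
      refine ((fderiv ℝ u (s + ψ y, y)).le_opNorm (1, -deriv ψ y)).trans ?_
      refine mul_le_mul_of_nonneg_left ?_ hN0
      have := hL y hy
      rw [Prod.norm_def, norm_neg, norm_one]
      exact max_le (by linarith) (by linarith)
    have h4 : |k (u (s + ψ y, y)) * fderiv ℝ u (s + ψ y, y) (1, -deriv ψ y)| ≤ M * N := by
      rw [abs_mul]
      calc _ ≤ B * (N * (1 + L)) := mul_le_mul h1.le h3 (abs_nonneg _) hB0.le
        _ = M * N := by ring
    have h5 : M * N ≤ δ / 4 + M ^ 2 / δ * N ^ 2 := by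
      have : δ / 4 + M ^ 2 / δ * N ^ 2 - M * N = (δ / 2 - M * N) ^ 2 / δ := by
        field_simp
        ring
      have h6 : 0 ≤ (δ / 2 - M * N) ^ 2 / δ := by positivity
      linarith
    have h7 : M ^ 2 / δ * N ^ 2 ≤ M ^ 2 / δ * E (s + ψ y, y) := by
      refine mul_le_mul_of_nonneg_left ?_ (by positivity)
      simp only [hE]
      nlinarith [sq_nonneg (u (s + ψ y, y))]
    simp only [fluxDensity]
    rw [fderivWithin_eq hψc u hs0]
    have := neg_abs_le (k (u (s + ψ y, y)) * fderiv ℝ u (s + ψ y, y) (1, -deriv ψ y))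
    have := le_abs_self (c * P (u (s + ψ y, y)))
    linarith
  have hJ : ∀ s < S, δ / 4 * (δ / M ^ 2) ≤ ∫ y in Ico (0:ℝ) 1, E (s + ψ y, y) := by
    intro s hs
    have hs0 : s < 0 := by have := min_le_left (-1) (X - A); linarith
    have hEc : Continuous fun y : ℝ => E (s + ψ y, y) := by
      have hmap : MapsTo (fun y : ℝ => (s + ψ y, y)) univ (Omega ψ) := by
        intro y _
        simpa [Omega] using hs0
      have hsh : ContinuousOn (fun y : ℝ => (s + ψ y, y)) univ := by fun_prop
      have a1 := hu.c2.continuousOn.comp hsh hmap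
      have a2 := (hu.c2.continuousOn_fderiv_of_isOpen (isOpen_Omega hψc) (by norm_num)).comp
        hsh hmap
      exact continuousOn_univ.mp ((a1.pow 2).add (a2.norm.pow 2))
    have hFc : Continuous fun y : ℝ => fluxDensity c ψ u k P s y := by
      have := (continuousOn_fluxDensity hψ hu hkc hPc).comp (s := univ)
        (f := fun y : ℝ => (s, y)) (by fun_prop) (fun y _ => ⟨mem_Iic.mpr hs0.le, mem_univ _⟩)
      exact continuousOn_univ.mp this
    have h1 : δ ≤ -∫ y in (0:ℝ)..1, fluxDensity c ψ u k P s y :=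
      neg_le_neg (hmono (mem_Iic.mpr hs0.le) (mem_Iic.mpr le_rfl) hs0.le)
    have h2 : ∫ y in (0:ℝ)..1, -fluxDensity c ψ u k P s y
        ≤ ∫ y in (0:ℝ)..1, (3 * δ / 4 + M ^ 2 / δ * E (s + ψ y, y)) :=
      intervalIntegral.integral_mono_on zero_le_one (hFc.neg.intervalIntegrable _ _)
        ((continuous_const.add (continuous_const.mul hEc)).intervalIntegrable _ _) (hpt s hs)
    have hEi : IntervalIntegrable (fun y => M ^ 2 / δ * E (s + ψ y, y)) volume 0 1 :=
      (continuous_const.mul hEc).intervalIntegrable _ _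
    rw [intervalIntegral.integral_neg, intervalIntegral.integral_add
      (continuous_const.intervalIntegrable _ _) hEi, intervalIntegral.integral_const_mul,
      intervalIntegral.integral_const] at h2
    rw [integral_Ico_eq_integral_Ioc, ← intervalIntegral.integral_of_le zero_le_one]
    set J := ∫ y in (0:ℝ)..1, E (s + ψ y, y)
    have h3 : δ / 4 ≤ M ^ 2 / δ * J := by
      simp at h2
      linarith
    calc δ / 4 * (δ / M ^ 2) ≤ M ^ 2 / δ * J * (δ / M ^ 2) :=
          mul_le_mul_of_nonneg_right h3 (by positivity)
      _ = J := by field_simp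
  have hint := (integrableOn_shear hψc hu.energy).mono_set
    (Iio_subset_Iio (show S ≤ 0 by have := min_le_left (-1) (X - A); linarith))
  have hconst : IntegrableOn (fun _ : ℝ => δ / 4 * (δ / M ^ 2)) (Iio S) := by
    refine Integrable.mono' hint aestronglyMeasurable_const ?_
    refine (ae_restrict_iff' measurableSet_Iio).mpr (ae_of_all _ fun s hs => ?_)
    rw [Real.norm_of_nonneg (by positivity)]
    exact hJ s hs
  rw [integrableOn_const_iff] at hconst
  rcases hconst with h | h
  · simp [hδ0.ne', hM0.ne'] at h
  · simp at h

/-! ### The integral inequality on the front -/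

lemma continuous_trace {c : ℝ} {ψ : ℝ → ℝ} {u : ℝ × ℝ → ℝ}
    (hψ : W2infPer ψ) (hu : IsTempSol c ψ u) : Continuous fun y => u (ψ y, y) := by
  have hψc := hψ.contDiff.continuous
  have := hu.contOn.comp (s := univ) (f := fun y : ℝ => (ψ y, y)) (by fun_prop)
    (fun y _ => by simp [OmegaCl])
  exact continuousOn_univ.mp this

lemma integral_le_of_smooth {c : ℝ} {ψ : ℝ → ℝ} {u : ℝ × ℝ → ℝ} (hc : 0 < c)
    (hψ : W2infPer ψ) (hu : IsTempSol c ψ u) {k k' : ℝ → ℝ}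
    (hk : ∀ t, HasDerivAt k (k' t) t) (hk'c : Continuous k') (hk'0 : ∀ t, 0 ≤ k' t) :
    ∫ s in (0:ℝ)..1, k s ≤ ∫ y in (0:ℝ)..1, k (u (ψ y, y)) := by
  have hkc : Continuous k := continuous_iff_continuousAt.mpr fun t => (hk t).continuousAt
  have hkm : Monotone k := monotone_of_hasDerivAt_nonneg hk hk'0
  -- normalising `k` to vanish at `1` makes its primitive `P` minimal at `1`
  set h : ℝ → ℝ := fun t => k t - k 1 with hh
  have hhc : Continuous h := by fun_prop
  set P : ℝ → ℝ := fun t => ∫ s in (0:ℝ)..t, h s with hP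
  have hPd : ∀ t, HasDerivAt P (h t) t := fun t => hhc.integral_hasStrictDerivAt 0 t |>.hasDerivAt
  have hPc : Continuous P := continuous_iff_continuousAt.mpr fun t => (hPd t).continuousAt
  have hPmin : ∀ t, P 1 ≤ P t := by
    intro t
    have h1 : P t - P 1 = ∫ s in (1:ℝ)..t, h s :=
      intervalIntegral.integral_interval_sub_left (hhc.intervalIntegrable _ _)
        (hhc.intervalIntegrable _ _)
    rcases le_total 1 t with ht | ht
    · have : 0 ≤ ∫ s in (1:ℝ)..t, h s :=
        intervalIntegral.integral_nonneg ht fun s hs => sub_nonneg.mpr (hkm hs.1)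
      linarith
    · have : 0 ≤ ∫ s in t..(1:ℝ), -h s :=
        intervalIntegral.integral_nonneg ht fun s hs => by
          have := hkm hs.2
          simp only [hh]; linarith
      rw [intervalIntegral.integral_neg, ← intervalIntegral.integral_symm] at this
      linarith
  have htr := continuous_trace hψ hu
  have hflux := flux_nonneg hψ hu hhc hPc (by simp [hP])
    (monotoneOn_flux hψ hu hPd (fun t => (hk t).sub_const _) hk'c hk'0)
  have hbc : ∀ y, fluxDensity c ψ u h P 0 y = c * (h (u (ψ y, y)) - P (u (ψ y, y))) := by
    intro y
    have hpos : 0 < Real.sqrt (1 + deriv ψ y ^ 2) := Real.sqrt_pos.mpr (by positivity)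
    have hb := (div_left_inj' hpos.ne').mp (hu.bc y)
    simp only [fluxDensity, zero_add]
    rw [hb]; ring
  simp only [hbc] at hflux
  rw [intervalIntegral.integral_const_mul] at hflux
  have h1 := nonneg_of_mul_nonneg_right hflux hc
  have hhi : IntervalIntegrable (fun y => h (u (ψ y, y))) volume 0 1 :=
    (hhc.comp htr).intervalIntegrable _ _
  have hPi : IntervalIntegrable (fun y => P (u (ψ y, y))) volume 0 1 :=
    (hPc.comp htr).intervalIntegrable _ _
  have hki : IntervalIntegrable (fun y => k (u (ψ y, y))) volume 0 1 :=
    (hkc.comp htr).intervalIntegrable _ _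
  rw [intervalIntegral.integral_sub hhi hPi] at h1
  have h2 : P 1 ≤ ∫ y in (0:ℝ)..1, P (u (ψ y, y)) := by
    have := intervalIntegral.integral_mono_on (f := fun _ => P 1) (g := fun y => P (u (ψ y, y)))
      (zero_le_one' ℝ) (by simp) hPi (fun y _ => hPmin _)
    simpa using this
  have h3 : P 1 = (∫ s in (0:ℝ)..1, k s) - k 1 := by
    simp only [hP, hh]
    rw [intervalIntegral.integral_sub (hkc.intervalIntegrable _ _) (by simp)]
    simp
  have h4 : ∫ y in (0:ℝ)..1, h (u (ψ y, y)) = (∫ y in (0:ℝ)..1, k (u (ψ y, y))) - k 1 := by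
    simp only [hh]
    rw [intervalIntegral.integral_sub hki (by simp)]
    simp
  linarith

/-- The inequality for a merely continuous `K` follows from the smooth case applied to the
forward averages `t ↦ ε⁻¹ ∫_t^{t+ε} K`, which lie between `K` and `K(· + ε)`. -/
lemma integral_le_of_continuous {c : ℝ} {ψ : ℝ → ℝ} {u : ℝ × ℝ → ℝ} (hc : 0 < c)
    (hψ : W2infPer ψ) (hu : IsTempSol c ψ u) {K : ℝ → ℝ} (hK : Continuous K) (hm : Monotone K) :
    ∫ s in (0:ℝ)..1, K s ≤ ∫ y in (0:ℝ)..1, K (u (ψ y, y)) := by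
  have htr := continuous_trace hψ hu
  have key : ∀ ε > 0, ∫ s in (0:ℝ)..1, K s ≤ ∫ y in (0:ℝ)..1, K (u (ψ y, y) + ε) := by
    intro ε hε
    set Q : ℝ → ℝ := fun t => ∫ s in (0:ℝ)..t, K s with hQ
    have hQd : ∀ t, HasDerivAt Q (K t) t := fun t => hK.integral_hasStrictDerivAt 0 t |>.hasDerivAt
    set k : ℝ → ℝ := fun t => (Q (t + ε) - Q t) / ε with hk
    have hkd : ∀ t, HasDerivAt k ((K (t + ε) - K t) / ε) t := fun t =>
      (((hQd (t + ε)).comp_add_const t ε).sub (hQd t)).div_const ε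
    have hkc : Continuous k := continuous_iff_continuousAt.mpr fun t => (hkd t).continuousAt
    have hkint : ∀ t, Q (t + ε) - Q t = ∫ s in t..(t + ε), K s := fun t =>
      intervalIntegral.integral_interval_sub_left (hK.intervalIntegrable _ _)
        (hK.intervalIntegrable _ _)
    have hlow : ∀ t, K t ≤ k t := by
      intro t
      have := intervalIntegral.integral_mono_on (μ := volume)
        (f := fun _ => K t) (g := K)
        (show t ≤ t + ε by linarith)
        (continuous_const.intervalIntegrable _ _) (hK.intervalIntegrable _ _) (fun s hs => hm hs.1)
      simp only [hk]
      rw [le_div_iff₀ hε, hkint]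
      simp at this
      linarith
    have hupp : ∀ t, k t ≤ K (t + ε) := by
      intro t
      have := intervalIntegral.integral_mono_on (μ := volume)
        (f := K) (g := fun _ => K (t + ε))
        (show t ≤ t + ε by linarith) (hK.intervalIntegrable _ _)
        (continuous_const.intervalIntegrable _ _) (fun s hs => hm hs.2)
      simp only [hk]
      rw [div_le_iff₀ hε, hkint]
      simp at this
      linarith
    calc ∫ s in (0:ℝ)..1, K s ≤ ∫ s in (0:ℝ)..1, k s :=
          intervalIntegral.integral_mono_on zero_le_one (hK.intervalIntegrable _ _)
            (hkc.intervalIntegrable _ _) (fun s _ => hlow s)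
      _ ≤ ∫ y in (0:ℝ)..1, k (u (ψ y, y)) :=
          integral_le_of_smooth hc hψ hu hkd (by fun_prop)
            (fun t => div_nonneg (sub_nonneg.mpr (hm (by linarith))) hε.le)
      _ ≤ ∫ y in (0:ℝ)..1, K (u (ψ y, y) + ε) :=
          intervalIntegral.integral_mono_on zero_le_one ((hkc.comp htr).intervalIntegrable _ _)
            ((hK.comp (htr.add continuous_const)).intervalIntegrable _ _) (fun y _ => hupp _)
  have hcont : Continuous fun ε : ℝ => ∫ y in (0:ℝ)..1, K (u (ψ y, y) + ε) :=
    intervalIntegral.continuous_parametric_intervalIntegral_of_continuous'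
      (f := fun ε y => K (u (ψ y, y) + ε)) (by
        have : Continuous fun p : ℝ × ℝ => u (ψ p.2, p.2) := htr.comp continuous_snd
        exact hK.comp (this.add continuous_fst)) 0 1
  have hlim : Tendsto (fun ε : ℝ => ∫ y in (0:ℝ)..1, K (u (ψ y, y) + ε)) (nhdsWithin 0 (Ioi 0))
      (nhds (∫ y in (0:ℝ)..1, K (u (ψ y, y)))) := by
    have := (hcont.tendsto 0).mono_left (nhdsWithin_le_nhds (s := Ioi (0:ℝ)))
    simpa using this
  refine ge_of_tendsto hlim ?_
  filter_upwards [self_mem_nhdsWithin] with ε hε using key ε hε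

/-! ### The front equation -/

/-- The curvature term of the front equation integrates to zero, being the derivative of the
periodic Lipschitz function `ψ' / √(1 + ψ'²)`. -/
lemma integral_curvature {ψ : ℝ → ℝ} (hψ : W2infPer ψ) :
    IntervalIntegrable (fun y => deriv (deriv ψ) y / (1 + deriv ψ y ^ 2)
      / Real.sqrt (1 + deriv ψ y ^ 2)) volume 0 1 ∧
    ∫ y in (0:ℝ)..1, deriv (deriv ψ) y / (1 + deriv ψ y ^ 2) / Real.sqrt (1 + deriv ψ y ^ 2)
      = 0 := by
  obtain ⟨L, hL⟩ := hψ.lipDeriv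
  have hφ : ∀ t : ℝ, HasDerivAt (fun t : ℝ => t / Real.sqrt (1 + t ^ 2))
      (1 / (1 + t ^ 2) / Real.sqrt (1 + t ^ 2)) t := by
    intro t
    have hpos : 0 < 1 + t ^ 2 := by positivity
    have h1 : HasDerivAt (fun t : ℝ => 1 + t ^ 2) (2 * t) t := by
      simpa using ((hasDerivAt_id t).pow 2).const_add 1
    have h2 := (hasDerivAt_id t).div (h1.sqrt hpos.ne') (Real.sqrt_pos.mpr hpos).ne'
    have hs := Real.sq_sqrt hpos.le
    have hs0 := (Real.sqrt_pos.mpr hpos).ne'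
    have h3 : (1 * Real.sqrt (1 + t ^ 2) - id t * (2 * t / (2 * Real.sqrt (1 + t ^ 2))))
        / Real.sqrt (1 + t ^ 2) ^ 2 = 1 / (1 + t ^ 2) / Real.sqrt (1 + t ^ 2) := by
      rw [hs, id]
      field_simp
      rw [hs]; ring
    rw [← h3]
    exact h2
  have hlip : LipschitzWith 1 (fun t : ℝ => t / Real.sqrt (1 + t ^ 2)) := by
    refine lipschitzWith_of_nnnorm_deriv_le (fun t => (hφ t).differentiableAt) fun t => ?_
    rw [(hφ t).deriv, ← NNReal.coe_le_coe]
    have h1 : (1:ℝ) ≤ 1 + t ^ 2 := by nlinarith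
    have h2 : (1:ℝ) ≤ Real.sqrt (1 + t ^ 2) := Real.one_le_sqrt.mpr h1
    rw [coe_nnnorm, Real.norm_of_nonneg (by positivity), NNReal.coe_one, div_div]
    exact div_le_one_of_le₀ (by nlinarith) (by positivity)
  have hcomp := (hlip.comp hL).lipschitzOnWith (s := uIcc (0:ℝ) 1)
  have hac := hcomp.absolutelyContinuousOnInterval
  have hae : ∀ᵐ y : ℝ, deriv ((fun t : ℝ => t / Real.sqrt (1 + t ^ 2)) ∘ deriv ψ) y
      = deriv (deriv ψ) y / (1 + deriv ψ y ^ 2) / Real.sqrt (1 + deriv ψ y ^ 2) := by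
    filter_upwards [hL.ae_differentiableAt_real] with y hy
    rw [((hφ (deriv ψ y)).comp y hy.hasDerivAt).deriv]
    ring
  have hper : deriv ψ 1 = deriv ψ 0 := by
    have : (fun y => ψ (y + 1)) = ψ := funext hψ.periodic
    have h := deriv_comp_add_const ψ 1 0
    rw [this] at h
    simpa using h.symm
  refine ⟨hac.intervalIntegrable_deriv.congr_ae (ae_restrict_of_ae hae), ?_⟩
  rw [← intervalIntegral.integral_congr_ae (hae.mono fun y hy _ => hy),
    hac.integral_deriv_eq_sub]
  simp [hper]

/-- **Lower bound for the speed.** Under hypothesis (H), if `c > 0`, `ψ ∈ W^{2,∞}(𝕋)`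
satisfy the front equation a.e. where `u` is a nonnegative classical solution of the
temperature problem for `(c,ψ)`, then `c ≥ R_m ∫₀¹ K(s) ds`. -/
theorem speed_lower_bound
    (R K : ℝ → ℝ) (Rm RM KM : ℝ)
    (hRper : Function.Periodic R 1) (hRmeas : Measurable R)
    (hRm : 0 < Rm) (hRbd : ∀ y : ℝ, Rm ≤ R y ∧ R y ≤ RM)
    (hKcont : ContinuousOn K (Ici 0)) (hKmono : MonotoneOn K (Ici 0))
    (hKbd : ∀ s : ℝ, 0 < s → 0 < K s ∧ K s ≤ KM)
    (c : ℝ) (ψ : ℝ → ℝ) (u : ℝ × ℝ → ℝ)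
    (hc : 0 < c) (hψ : W2infPer ψ) (hu : IsTempSol c ψ u)
    (hu0 : ∀ p ∈ OmegaCl ψ, 0 ≤ u p)
    (hfront : ∀ᵐ y : ℝ,
      -c + R y * K (u (ψ y, y)) * Real.sqrt (1 + deriv ψ y ^ 2)
        = deriv (deriv ψ) y / (1 + deriv ψ y ^ 2)) :
    Rm * ∫ s in (0:ℝ)..1, K s ≤ c := by
  have htr := continuous_trace hψ hu
  have hψ' : Continuous (deriv ψ) := hψ.contDiff.continuous_deriv le_rfl
  -- extend `K` to a continuous monotone function on the line
  have hKc : Continuous fun t => K (max t 0) := by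
    have := hKcont.comp (s := univ) (f := fun t : ℝ => max t 0) (by fun_prop)
      (fun t _ => mem_Ici.mpr (le_max_right _ _))
    exact continuousOn_univ.mp this
  have hKm : Monotone fun t => K (max t 0) := fun a b hab =>
    hKmono (mem_Ici.mpr (le_max_right _ _)) (mem_Ici.mpr (le_max_right _ _))
      (max_le_max_right 0 hab)
  have hutr : ∀ y, 0 ≤ u (ψ y, y) := fun y => hu0 _ (by simp [OmegaCl])
  have hK0 : 0 ≤ K 0 := by
    have h1 : Tendsto (fun t : ℝ => K (max t 0)) (nhdsWithin 0 (Ioi 0)) (nhds (K 0)) := by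
      have := (hKc.tendsto 0).mono_left (nhdsWithin_le_nhds (s := Ioi (0:ℝ)))
      simpa using this
    refine ge_of_tendsto h1 ?_
    filter_upwards [self_mem_nhdsWithin] with t ht
    have ht' : (0:ℝ) < t := ht
    rw [max_eq_left ht'.le]
    exact (hKbd t ht').1.le
  have hKtr : ∀ y, 0 ≤ K (u (ψ y, y)) := fun y =>
    hK0.trans (hKmono (mem_Ici.mpr le_rfl) (mem_Ici.mpr (hutr y)) (hutr y))
  have hmain := integral_le_of_continuous hc hψ hu hKc hKm
  have e1 : ∫ s in (0:ℝ)..1, K (max s 0) = ∫ s in (0:ℝ)..1, K s := by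
    refine intervalIntegral.integral_congr fun s hs => ?_
    rw [uIcc_of_le zero_le_one] at hs
    simp only [max_eq_left hs.1]
  have e2 : (fun y => K (max (u (ψ y, y)) 0)) = fun y => K (u (ψ y, y)) :=
    funext fun y => by rw [max_eq_left (hutr y)]
  have hKtrc : Continuous fun y => K (u (ψ y, y)) := by
    rw [← e2]; exact hKc.comp htr
  rw [e1, e2] at hmain
  obtain ⟨hcurv, hcurv0⟩ := integral_curvature hψ
  have hsq : ∀ y, 1 ≤ Real.sqrt (1 + deriv ψ y ^ 2) := fun y =>
    Real.one_le_sqrt.mpr (by nlinarith [sq_nonneg (deriv ψ y)])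
  -- dividing the front equation by `√(1 + ψ'²) ≥ 1` turns its right side into an exact derivative
  have hae : ∀ᵐ y : ℝ, Rm * K (u (ψ y, y)) ≤ c + deriv (deriv ψ) y / (1 + deriv ψ y ^ 2)
      / Real.sqrt (1 + deriv ψ y ^ 2) := by
    filter_upwards [hfront] with y hy
    have hs := hsq y
    have hs0 : 0 < Real.sqrt (1 + deriv ψ y ^ 2) := by linarith
    have h1 : (-c + R y * K (u (ψ y, y)) * Real.sqrt (1 + deriv ψ y ^ 2))
        / Real.sqrt (1 + deriv ψ y ^ 2)
        = -(c / Real.sqrt (1 + deriv ψ y ^ 2)) + R y * K (u (ψ y, y)) := by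
      field_simp
    have h2 : c / Real.sqrt (1 + deriv ψ y ^ 2) ≤ c := div_le_self hc.le hs
    have h3 := mul_le_mul_of_nonneg_right (hRbd y).1 (hKtr y)
    rw [← hy, h1]
    linarith
  have hint : ∫ y in (0:ℝ)..1, Rm * K (u (ψ y, y)) ≤ ∫ y in (0:ℝ)..1,
      (c + deriv (deriv ψ) y / (1 + deriv ψ y ^ 2) / Real.sqrt (1 + deriv ψ y ^ 2)) :=
    intervalIntegral.integral_mono_ae zero_le_one
      ((continuous_const.mul hKtrc).intervalIntegrable _ _)
      (IntervalIntegrable.add (by simp) hcurv) hae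
  rw [intervalIntegral.integral_const_mul, intervalIntegral.integral_add (by simp) hcurv,
    hcurv0, intervalIntegral.integral_const] at hint
  have := mul_le_mul_of_nonneg_left hmain hRm.le
  simp at hint
  linarith
end
end

section
/- Let K : [0,∞) → ℝ be continuous and nondecreasing with 0 < K(u) ≤ K_M for all u > 0. Let c > 0, let ψ ∈ W^{2,∞}(𝕋), and let u be a nonnegative classical solution of the temperature problem for (c,ψ). Then ∫_𝕋 K(u(ψ(y),y)) dy ≥ ∫₀¹ K(s) ds. -/
/-!
Testing the equation `c uₓ = Δu` with `H(u)`, where `H` is nondecreasing with primitive `G`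
vanishing at `0`, and using the Neumann condition gives
`c ∫ H(u(ψ(y),y)) dy - c ∫ G(u(ψ(y),y)) dy = ∫ H'(u) |∇u|² ≥ 0`.
Take formally `H = K - K(1)`: then `G` is convex with `G'(1) = 0`, so `G ≥ G(1) = ∫₀¹ K - K(1)`,
and the inequality becomes `∫ K(u(ψ(y),y)) dy - K(1) ≥ ∫₀¹ K - K(1)`.

The test inequality (`boundary_ineq`) is obtained inside `Ω_ψ`, where `u` is `C²`: the flux of
`H(u) ∇u - c (G(u), 0)` through the front translated by `t < 0` is nondecreasing in `t`
(`flux_mono`). It is continuous up to `t = 0` because `u` is `C¹` up to the boundary, the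
derivative within the closed domain being unique (`uniqueDiffOn_OmegaCl`). It tends to `0` along
some sequence `t → -∞`, by the decay of `u` and the finiteness of its energy
(`exists_small_slice`).

As `K` is only continuous, it is extended by the constant `K(0)` to the left of `0` and replaced
by its Steklov averages `s ↦ ε⁻¹ ∫_s^{s+ε} K`, which are `C¹`, nondecreasing and lie between
`K(s)` and `K(s + ε)`; then `ε → 0`.
-/

open MeasureTheory Set Filter
open scoped NNReal

noncomputable section

lemma Omega_subset (ψ : ℝ → ℝ) : Omega ψ ⊆ OmegaCl ψ := by
  intro p hp
  have h : p.1 < ψ p.2 := hp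
  exact h.le

/-! ### Fluxes through translated fronts -/

lemma integral_swap_cont {f : ℝ × ℝ → ℝ} {a b : ℝ} (hf : Continuous f) :
    ∫ t in a..b, ∫ y in (0:ℝ)..1, f (t, y) = ∫ y in (0:ℝ)..1, ∫ t in a..b, f (t, y) := by
  refine intervalIntegral_intervalIntegral_swap (F := fun t y => f (t, y)) ?_
  have : IntegrableOn f (uIcc a b ×ˢ uIcc (0:ℝ) 1) :=
    hf.continuousOn.integrableOn_compact (isCompact_uIcc.prod isCompact_uIcc)
  exact this.mono_set (prod_mono uIoc_subset_uIcc uIoc_subset_uIcc)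

/-- If `(P, Q)` is `C¹`, `Q` is periodic in `y` and `div (P, Q) ≥ 0`, then the flux of `(P, Q)`
through the translated front `{x = ψ(y) + t}` is nondecreasing in `t < 0`.
No change of variables is needed: `∫ (ψ' Q_x + Q_y)(ψ(y) + t, y) dy = 0` for each `t` by periodicity,
so by Fubini the flux difference is the integral of the divergence between the two fronts. -/
lemma flux_mono {ψ : ℝ → ℝ} (hψ : ContDiff ℝ 1 ψ) (hper : Function.Periodic ψ 1)
    {P Q : ℝ × ℝ → ℝ} (hP : ContDiffOn ℝ 1 P (Omega ψ)) (hQ : ContDiffOn ℝ 1 Q (Omega ψ))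
    (hQper : ∀ x y, (x, y) ∈ Omega ψ → Q (x, y + 1) = Q (x, y))
    (hdiv : ∀ p ∈ Omega ψ, 0 ≤ pdx P p + pdy Q p) {a b : ℝ} (hab : a ≤ b) (hb : b < 0) :
    ∫ y in (0:ℝ)..1, (P (ψ y + a, y) - deriv ψ y * Q (ψ y + a, y)) ≤
      ∫ y in (0:ℝ)..1, (P (ψ y + b, y) - deriv ψ y * Q (ψ y + b, y)) := by
  have hO := isOpen_Omega hψ.continuous
  have hψ' : Continuous (deriv ψ) := hψ.continuous_deriv le_rfl
  have hψd : ∀ y, HasDerivAt ψ (deriv ψ y) y := fun y =>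
    (hψ.differentiable one_ne_zero y).hasDerivAt
  -- truncating `t` at `b` makes the integrands continuous on the whole plane
  let S : ℝ × ℝ → ℝ × ℝ := fun q => (ψ q.2 + min q.1 b, q.2)
  have hSc : Continuous S := by
    have := hψ.continuous
    fun_prop
  have hSm : ∀ q, S q ∈ Omega ψ := fun q => by
    change ψ q.2 + min q.1 b < ψ q.2
    linarith [min_le_right q.1 b]
  have hSe : ∀ t ∈ uIcc a b, ∀ y, S (t, y) = (ψ y + t, y) := fun t ht y => by
    rw [uIcc_of_le hab] at ht
    simp [S, ht.2]
  obtain ⟨DP, hDPe⟩ : ∃ D : ℝ × ℝ → (ℝ × ℝ →L[ℝ] ℝ), ∀ q, D q = fderiv ℝ P (S q) := ⟨_, fun _ => rfl⟩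
  obtain ⟨DQ, hDQe⟩ : ∃ D : ℝ × ℝ → (ℝ × ℝ →L[ℝ] ℝ), ∀ q, D q = fderiv ℝ Q (S q) := ⟨_, fun _ => rfl⟩
  have hDP : Continuous DP := (continuous_congr hDPe).2 <|
    (hP.continuousOn_fderiv_of_isOpen hO le_rfl).comp_continuous hSc hSm
  have hDQ : Continuous DQ := (continuous_congr hDQe).2 <|
    (hQ.continuousOn_fderiv_of_isOpen hO le_rfl).comp_continuous hSc hSm
  have hPS : Continuous fun q => P (S q) := hP.continuousOn.comp_continuous hSc hSm
  have hQS : Continuous fun q => Q (S q) := hQ.continuousOn.comp_continuous hSc hSm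
  have hfd : ∀ {F : ℝ × ℝ → ℝ}, ContDiffOn ℝ 1 F (Omega ψ) → ∀ p ∈ Omega ψ,
      HasFDerivAt F (fderiv ℝ F p) p := fun hF p hp =>
    ((hF.differentiableOn one_ne_zero).differentiableAt (hO.mem_nhds hp)).hasFDerivAt
  -- fundamental theorem of calculus along the direction `x`
  have ftcx : ∀ {F : ℝ × ℝ → ℝ} {D : ℝ × ℝ → (ℝ × ℝ →L[ℝ] ℝ)}, ContDiffOn ℝ 1 F (Omega ψ) →
      Continuous D → (∀ q, D q = fderiv ℝ F (S q)) → ∀ y,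
      ∫ t in a..b, D (t, y) (1, 0) = F (ψ y + b, y) - F (ψ y + a, y) := by
    intro F D hF hD hDe y
    refine intervalIntegral.integral_eq_sub_of_hasDerivAt (f := fun t => F (ψ y + t, y)) ?_ ?_
    · intro t ht
      have h1 : HasDerivAt (fun t : ℝ => (ψ y + t, y)) ((1:ℝ), (0:ℝ)) t :=
        ((hasDerivAt_id t).const_add (ψ y)).prodMk (hasDerivAt_const t y)
      have h2 := hfd hF (S (t, y)) (hSm _)
      rw [hDe]
      rw [hSe t ht y] at h2 ⊢
      exact h2.comp_hasDerivAt t h1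
    · exact Continuous.intervalIntegrable (by fun_prop) _ _
  -- the tangential derivative of a periodic function has zero mean
  have ftcy : ∀ t ∈ uIcc a b,
      ∫ y in (0:ℝ)..1, DQ (t, y) (deriv ψ y, 1) = 0 := by
    intro t ht
    have : ∫ y in (0:ℝ)..1, DQ (t, y) (deriv ψ y, 1)
        = Q (ψ 1 + t, 1) - Q (ψ 0 + t, 0) := by
      refine intervalIntegral.integral_eq_sub_of_hasDerivAt (f := fun y => Q (ψ y + t, y)) ?_ ?_
      · intro y _
        have h1 : HasDerivAt (fun y : ℝ => (ψ y + t, y)) (deriv ψ y, (1:ℝ)) y :=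
          ((hψd y).add_const t).prodMk (hasDerivAt_id y)
        have h2 := hfd hQ (S (t, y)) (hSm _)
        rw [hDQe]
        rw [hSe t ht y] at h2 ⊢
        exact HasFDerivAt.comp_hasDerivAt (f := fun y : ℝ => (ψ y + t, y)) y h2 h1
      · exact Continuous.intervalIntegrable (by fun_prop) _ _
    rw [this]
    have h0 := hSm (t, 0)
    rw [hSe t ht 0] at h0
    have h1 := hQper _ _ h0
    have h2 := hper 0
    rw [zero_add] at h1 h2
    rw [h2, h1, sub_self]
  have hb' : b ∈ uIcc a b := right_mem_uIcc
  have ha' : a ∈ uIcc a b := left_mem_uIcc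
  have hint : ∀ t ∈ uIcc a b, IntervalIntegrable
      (fun y => P (ψ y + t, y) - deriv ψ y * Q (ψ y + t, y)) volume 0 1 := by
    intro t ht
    have hcy : Continuous fun y : ℝ => (t, y) := by fun_prop
    have : Continuous fun y => P (S (t, y)) - deriv ψ y * Q (S (t, y)) :=
      (hPS.comp hcy).sub (hψ'.mul (hQS.comp hcy))
    simp only [hSe t ht] at this
    exact this.intervalIntegrable _ _
  rw [← sub_nonneg, ← intervalIntegral.integral_sub (hint b hb') (hint a ha')]
  have key : ∀ y, (P (ψ y + b, y) - deriv ψ y * Q (ψ y + b, y)) -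
      (P (ψ y + a, y) - deriv ψ y * Q (ψ y + a, y)) =
      ∫ t in a..b, (DP (t, y) (1, 0) - deriv ψ y * DQ (t, y) (1, 0)) := by
    intro y
    rw [intervalIntegral.integral_sub, intervalIntegral.integral_const_mul, ftcx hP hDP hDPe,
      ftcx hQ hDQ hDQe]
    · ring
    · exact Continuous.intervalIntegrable (by fun_prop) _ _
    · exact Continuous.intervalIntegrable (by fun_prop) _ _
  simp only [key]
  rw [← integral_swap_cont (f := fun q => DP q (1, 0) -
    deriv ψ q.2 * DQ q (1, 0)) (by fun_prop)]
  refine intervalIntegral.integral_nonneg hab fun t ht => ?_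
  rw [← uIcc_of_le hab] at ht
  have hz := ftcy t ht
  suffices h : 0 ≤ (∫ y in (0:ℝ)..1, (DP (t, y) (1, 0) - deriv ψ y * DQ (t, y) (1, 0))) +
      ∫ y in (0:ℝ)..1, DQ (t, y) (deriv ψ y, 1) by
    rwa [hz, add_zero] at h
  rw [← intervalIntegral.integral_add]
  · refine intervalIntegral.integral_nonneg zero_le_one fun y _ => ?_
    have h1 := hdiv _ (hSm (t, y))
    have h2 : DQ (t, y) (deriv ψ y, 1) =
        deriv ψ y * DQ (t, y) (1, 0) + DQ (t, y) (0, 1) := by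
      have : ((deriv ψ y, 1) : ℝ × ℝ) = deriv ψ y • ((1:ℝ), (0:ℝ)) + (0, 1) := by simp
      rw [this, map_add, map_smul, smul_eq_mul]
    simp only [pdx, pdy, ← hDPe, ← hDQe] at h1
    rw [h2]
    linarith
  · exact Continuous.intervalIntegrable (by fun_prop) _ _
  · exact Continuous.intervalIntegrable (by fun_prop) _ _

/-- An integrable function on one period of `Ω_ψ` has integral below any `η > 0` over some front
`{x = ψ(y) + a}` with `a` arbitrarily negative, since otherwise a positive constant would be
integrable on a left half-line. -/
lemma exists_small_slice {ψ : ℝ → ℝ} (hψ : Continuous ψ) {h : ℝ × ℝ → ℝ}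
    (hh : IntegrableOn h (Omega ψ ∩ {p : ℝ × ℝ | p.2 ∈ Ico (0 : ℝ) 1})) (T : ℝ) {η : ℝ}
    (hη : 0 < η) :
    ∃ a < T, a < 0 ∧ ∫ y in (0:ℝ)..1, h (ψ y + a, y) < η := by
  have hmp : MeasurePreserving (fun q : ℝ × ℝ => (q.1, ψ q.1 + q.2)) volume volume :=
    (MeasurePreserving.id volume).skew_product (g := fun y t => ψ y + t)
      (by have := hψ.measurable; fun_prop)
      (Filter.Eventually.of_forall fun y => map_add_left_eq_self volume (ψ y))
  have hsw : MeasurePreserving (Prod.swap : ℝ × ℝ → ℝ × ℝ) volume volume :=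
    Measure.measurePreserving_swap
  have hΦ : MeasurePreserving (fun q : ℝ × ℝ => (ψ q.2 + q.1, q.2)) volume volume :=
    hsw.comp (hmp.comp hsw)
  have hmeas : MeasurableSet (Omega ψ ∩ {p : ℝ × ℝ | p.2 ∈ Ico (0 : ℝ) 1}) :=
    (isOpen_Omega hψ).measurableSet.inter (measurable_snd measurableSet_Ico)
  have hpre : (fun q : ℝ × ℝ => (ψ q.2 + q.1, q.2)) ⁻¹'
      (Omega ψ ∩ {p : ℝ × ℝ | p.2 ∈ Ico (0 : ℝ) 1}) = Iio 0 ×ˢ Ico 0 1 := by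
    ext ⟨t, y⟩
    simp [Omega]
  have h1 := (hΦ.restrict_preimage hmeas).integrable_comp_of_integrable hh
  rw [hpre, Measure.volume_eq_prod, ← Measure.prod_restrict] at h1
  have h2 := h1.integral_prod_left
  by_contra! hcon
  have h3 : IntegrableOn (fun _ : ℝ => η) (Iio (min T 0)) := by
    have h4 : IntegrableOn (fun t : ℝ => ∫ y in Ico (0:ℝ) 1, h (ψ y + t, y)) (Iio (min T 0)) :=
      IntegrableOn.mono_set h2 (Iio_subset_Iio (min_le_right _ _))
    refine Integrable.mono' h4 aestronglyMeasurable_const ?_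
    filter_upwards [ae_restrict_mem measurableSet_Iio] with t ht
    have h5 := hcon t (lt_of_lt_of_le ht (min_le_left _ _)) (lt_of_lt_of_le ht (min_le_right _ _))
    rw [intervalIntegral.integral_of_le zero_le_one, ← integral_Ico_eq_integral_Ioc] at h5
    rwa [Real.norm_of_nonneg hη.le]
  rw [integrableOn_const_iff] at h3
  simp [hη.ne'] at h3

/-! ### The test inequality -/

/-- Testing the equation with `H(u)`, for `H` nondecreasing and `C¹` with primitive `G`,
`G 0 = 0`. It expresses `c ∫ (H(u) - G(u)) dy = ∫ H'(u) |∇u|² ≥ 0`, the left-hand side being taken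
along the front and the middle integral over one period of `Ω_ψ`. -/
lemma boundary_ineq {c : ℝ} {ψ : ℝ → ℝ} {u : ℝ × ℝ → ℝ} (hc : 0 < c) (hψ : ContDiff ℝ 1 ψ)
    (hper : Function.Periodic ψ 1) (hu : IsTempSol c ψ u) {H G : ℝ → ℝ}
    (hH : ContDiff ℝ 1 H) (hHm : Monotone H) (hG : ∀ s, HasDerivAt G (H s) s) (hG0 : G 0 = 0) :
    ∫ y in (0:ℝ)..1, G (u (ψ y, y)) ≤ ∫ y in (0:ℝ)..1, H (u (ψ y, y)) := by
  have hO := isOpen_Omega hψ.continuous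
  have hψ' : Continuous (deriv ψ) := hψ.continuous_deriv le_rfl
  have hψc := hψ.continuous
  have hHc := hH.continuous
  have hGc : Continuous G := continuous_iff_continuousAt.2 fun s => (hG s).continuousAt
  have hG1 : ContDiff ℝ 1 G := by
    rw [contDiff_one_iff_deriv]
    refine ⟨fun s => (hG s).differentiableAt, ?_⟩
    rwa [funext fun s => (hG s).deriv]
  have hud : ∀ p ∈ Omega ψ, DifferentiableAt ℝ u p := fun p hp =>
    (hu.c2.differentiableOn two_ne_zero).differentiableAt (hO.mem_nhds hp)
  have hDu : ContDiffOn ℝ 1 (fderiv ℝ u) (Omega ψ) :=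
    hu.c2.fderiv_of_isOpen hO (by norm_num)
  have hx : ContDiffOn ℝ 1 (pdx u) (Omega ψ) := hDu.clm_apply contDiffOn_const
  have hy : ContDiffOn ℝ 1 (pdy u) (Omega ψ) := hDu.clm_apply contDiffOn_const
  have hu1 : ContDiffOn ℝ 1 u (Omega ψ) := hu.c2.of_le (by norm_num)
  -- `(P, Q) = H(u) ∇u - c (G(u), 0)` has divergence `H'(u) |∇u|² ≥ 0`
  let P : ℝ × ℝ → ℝ := fun p => pdx u p * H (u p) - c * G (u p)
  let Q : ℝ × ℝ → ℝ := fun p => pdy u p * H (u p)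
  have hP : ContDiffOn ℝ 1 P (Omega ψ) :=
    (hx.mul (hH.comp_contDiffOn hu1)).sub (contDiffOn_const.mul (hG1.comp_contDiffOn hu1))
  have hQ : ContDiffOn ℝ 1 Q (Omega ψ) := hy.mul (hH.comp_contDiffOn hu1)
  have hQper : ∀ x y, (x, y) ∈ Omega ψ → Q (x, y + 1) = Q (x, y) := by
    intro x y _
    have h1 : (fun p => u (p + ((0:ℝ), (1:ℝ)))) = u := by
      ext ⟨a, b⟩
      simpa using hu.periodic a b
    have h2 := fderiv_comp_add_right (𝕜 := ℝ) (f := u) (x := (x, y)) ((0:ℝ), (1:ℝ))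
    rw [h1] at h2
    simp only [Prod.mk_add_mk, add_zero] at h2
    simp only [Q, pdy, hu.periodic, h2]
  have hdiv : ∀ p ∈ Omega ψ, 0 ≤ pdx P p + pdy Q p := by
    intro p hp
    have hup := (hud p hp).hasFDerivAt
    have hHu : HasFDerivAt (fun p => H (u p)) (deriv H (u p) • fderiv ℝ u p) p :=
      ((hH.differentiable one_ne_zero _).hasDerivAt).comp_hasFDerivAt p hup
    have hGu : HasFDerivAt (fun p => G (u p)) (H (u p) • fderiv ℝ u p) p :=
      (hG _).comp_hasFDerivAt p hup
    have hxp := ((hx.differentiableOn one_ne_zero).differentiableAt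
      (hO.mem_nhds hp)).hasFDerivAt
    have hyp := ((hy.differentiableOn one_ne_zero).differentiableAt
      (hO.mem_nhds hp)).hasFDerivAt
    have hPp : pdx P p = pdx u p * (deriv H (u p) * pdx u p) + H (u p) * pdx (pdx u) p
        - c * (H (u p) * pdx u p) := by
      have := ((hxp.mul hHu).sub (hGu.const_mul c)).fderiv
      have h2 : fderiv ℝ P p = _ := this
      rw [pdx, h2]
      simp [pdx]
    have hQp : pdy Q p = pdy u p * (deriv H (u p) * pdy u p) + H (u p) * pdy (pdy u) p := by
      have h2 : fderiv ℝ Q p = _ := (hyp.mul hHu).fderiv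
      rw [pdy, h2]
      simp [pdy]
    have hpde := hu.pde p hp
    rw [lap] at hpde
    have hnn : 0 ≤ deriv H (u p) := hHm.deriv_nonneg
    have : pdx P p + pdy Q p = deriv H (u p) * (pdx u p ^ 2 + pdy u p ^ 2) := by
      rw [hPp, hQp]
      linear_combination -H (u p) * hpde
    rw [this]
    positivity
  -- the flux density through the shifted front, made continuous up to `t = 0`
  obtain ⟨D, hDe⟩ : ∃ D : ℝ × ℝ → (ℝ × ℝ →L[ℝ] ℝ), D = fderivWithin ℝ u (OmegaCl ψ) :=
    ⟨_, rfl⟩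
  have hDO : ∀ p ∈ Omega ψ, D p = fderiv ℝ u p := fun p hp => by
    rw [hDe]
    exact fderivWithin_of_mem_nhds (mem_of_superset (hO.mem_nhds hp) (Omega_subset ψ))
  have hDc : ContinuousOn D (OmegaCl ψ) := by
    rw [hDe]
    exact hu.c1.continuousOn_fderivWithin (uniqueDiffOn_OmegaCl hψ) le_rfl
  let S : ℝ × ℝ → ℝ × ℝ := fun q => (ψ q.2 + min q.1 0, q.2)
  have hSc : Continuous S := by fun_prop
  have hSm : ∀ q, S q ∈ OmegaCl ψ := fun q => by
    change ψ q.2 + min q.1 0 ≤ ψ q.2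
    linarith [min_le_right q.1 0]
  have hSe : ∀ t < 0, ∀ y, S (t, y) = (ψ y + t, y) := fun t ht y => by
    simp [S, min_eq_left ht.le]
  have hSO : ∀ t < 0, ∀ y, (ψ y + t, y) ∈ Omega ψ := fun t ht y => by
    change ψ y + t < ψ y
    linarith
  obtain ⟨E, hEe⟩ : ∃ E : ℝ × ℝ → (ℝ × ℝ →L[ℝ] ℝ), ∀ q, E q = D (S q) := ⟨_, fun _ => rfl⟩
  obtain ⟨V, hVe⟩ : ∃ V : ℝ × ℝ → ℝ, ∀ q, V q = u (S q) := ⟨_, fun _ => rfl⟩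
  have hE : Continuous E := (continuous_congr hEe).2 (hDc.comp_continuous hSc hSm)
  have hV : Continuous V := (continuous_congr hVe).2 (hu.contOn.comp_continuous hSc hSm)
  let f : ℝ × ℝ → ℝ := fun q => E q (1, -deriv ψ q.2) * H (V q) - c * G (V q)
  have hf : Continuous f := by fun_prop
  let I : ℝ → ℝ := fun t => ∫ y in (0:ℝ)..1, f (t, y)
  have hI : Continuous I :=
    intervalIntegral.continuous_parametric_intervalIntegral_of_continuous'
      (f := fun t y => f (t, y)) hf 0 1
  have hIe : ∀ t < 0, I t =
      ∫ y in (0:ℝ)..1, (P (ψ y + t, y) - deriv ψ y * Q (ψ y + t, y)) := by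
    intro t ht
    refine intervalIntegral.integral_congr fun y _ => ?_
    have hlin : ∀ A : ℝ × ℝ →L[ℝ] ℝ, A (1, -deriv ψ y) = A (1, 0) - deriv ψ y * A (0, 1) := by
      intro A
      have : ((1, -deriv ψ y) : ℝ × ℝ) = (1, 0) - deriv ψ y • ((0:ℝ), (1:ℝ)) := by simp
      rw [this, map_sub, map_smul, smul_eq_mul]
    simp only [f, P, Q, hEe, hVe, hSe t ht, hDO _ (hSO t ht y), hlin, pdx, pdy]
    ring
  have hImono : ∀ a < 0, I a ≤ I 0 := by
    intro a ha
    have ht : Tendsto I (nhdsWithin 0 (Iio 0)) (nhds (I 0)) :=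
      hI.continuousAt.tendsto.mono_left nhdsWithin_le_nhds
    refine ge_of_tendsto ht ?_
    filter_upwards [Ioo_mem_nhdsLT ha] with b hb
    rw [hIe a ha, hIe b hb.2]
    exact flux_mono hψ hper hP hQ hQper hdiv hb.1.le hb.2
  -- the flux becomes negligible along some sequence `a → -∞`
  have hsmall : ∀ ε > 0, ∃ a < 0, -ε ≤ I a := by
    intro ε hε
    obtain ⟨L, hL⟩ := (isCompact_Icc (a := (0:ℝ)) (b := 1)).exists_bound_of_continuousOn
      hψ'.continuousOn
    obtain ⟨M, hM⟩ := (isCompact_Icc (a := (-1:ℝ)) (b := 1)).exists_bound_of_continuousOn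
      hHc.continuousOn
    have hL0 : 0 ≤ L := (norm_nonneg _).trans (hL 0 (by simp))
    have hM0 : 0 ≤ M := (norm_nonneg _).trans (hM 0 (by simp))
    obtain ⟨δ, hδ, hδG⟩ := Metric.continuousAt_iff.1 hGc.continuousAt (ε / (2 * c))
      (by positivity : 0 < ε / (2 * c))
    obtain ⟨X, hX⟩ := hu.decay (min 1 (δ / 2)) (by positivity)
    obtain ⟨B, hB⟩ := (isCompact_Icc (a := (0:ℝ)) (b := 1)).exists_bound_of_continuousOn
      hψc.continuousOn
    let C : ℝ := (1 + L) * M + 1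
    have hC : 0 < C := by positivity
    let η : ℝ := ε / (4 * C)
    have hη : 0 < η := by positivity
    obtain ⟨a, haT, ha, haE⟩ := exists_small_slice hψc hu.energy (X - B)
      (by positivity : 0 < η ^ 2)
    refine ⟨a, ha, ?_⟩
    have he : Continuous fun y => V (a, y) ^ 2 + ‖E (a, y)‖ ^ 2 := by fun_prop
    have haE' : ∫ y in (0:ℝ)..1, (V (a, y) ^ 2 + ‖E (a, y)‖ ^ 2) < η ^ 2 := by
      simpa only [hEe, hVe, hSe a ha, hDO _ (hSO a ha _)] using haE
    have hpt : ∀ y ∈ Icc (0:ℝ) 1,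
        -(C * η + ε / 2) - C / η * (V (a, y) ^ 2 + ‖E (a, y)‖ ^ 2) ≤ f (a, y) := by
      intro y hy
      have hua : |V (a, y)| ≤ min 1 (δ / 2) := by
        rw [hVe]
        refine hX _ (hSm _) ?_
        rw [hSe a ha]
        have := (le_abs_self _).trans (hB y hy)
        change ψ y + a ≤ X
        linarith
      have hH1 : |H (V (a, y))| ≤ M := hM _ (abs_le.1 (hua.trans (min_le_left _ _)))
      have hG1 : |G (V (a, y))| ≤ ε / (2 * c) := by
        have := @hδG (V (a, y)) (by
          rw [Real.dist_eq, sub_zero]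
          linarith [hua.trans (min_le_right _ _)])
        rw [hG0, Real.dist_eq, sub_zero] at this
        exact this.le
      have hE1 : |E (a, y) (1, -deriv ψ y)| ≤ ‖E (a, y)‖ * (1 + L) := by
        refine ((E (a, y)).le_opNorm _).trans ?_
        gcongr
        rw [Prod.norm_def]
        refine max_le ?_ ?_
        · simpa using hL0
        · have := hL y hy
          simp only [norm_neg]
          linarith
      have h1 : |E (a, y) (1, -deriv ψ y) * H (V (a, y))| ≤ ‖E (a, y)‖ * C := by
        rw [abs_mul]
        calc _ ≤ (‖E (a, y)‖ * (1 + L)) * M := by gcongr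
          _ ≤ _ := by
            have := norm_nonneg (E (a, y))
            simp only [C]
            nlinarith
      have h2 : c * G (V (a, y)) ≤ ε / 2 := by
        calc c * G (V (a, y)) ≤ c * (ε / (2 * c)) := by
              gcongr
              exact (le_abs_self _).trans hG1
          _ = ε / 2 := by field_simp
      have h3 : ‖E (a, y)‖ * C ≤ C * η + C / η * (V (a, y) ^ 2 + ‖E (a, y)‖ ^ 2) := by
        have h4 : ‖E (a, y)‖ ≤ η + (V (a, y) ^ 2 + ‖E (a, y)‖ ^ 2) / η := by
          rw [← sub_le_iff_le_add', le_div_iff₀ hη]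
          nlinarith [sq_nonneg (‖E (a, y)‖ - η), sq_nonneg (V (a, y)), sq_nonneg η,
            norm_nonneg (E (a, y)), sq_nonneg (‖E (a, y)‖)]
        calc ‖E (a, y)‖ * C ≤ (η + (V (a, y) ^ 2 + ‖E (a, y)‖ ^ 2) / η) * C := by gcongr
          _ = _ := by ring
      have h5 := (abs_le.1 h1).1
      simp only [f]
      linarith
    have hint := intervalIntegral.integral_mono_on (μ := volume) zero_le_one
      (Continuous.intervalIntegrable (by fun_prop) 0 1)
      (Continuous.intervalIntegrable (by fun_prop) 0 1) hpt
    rw [intervalIntegral.integral_sub (Continuous.intervalIntegrable (by fun_prop) 0 1)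
      (Continuous.intervalIntegrable (by fun_prop) 0 1), intervalIntegral.integral_const_mul,
      intervalIntegral.integral_const] at hint
    refine le_trans ?_ hint
    have h6 : C / η * ∫ y in (0:ℝ)..1, (V (a, y) ^ 2 + ‖E (a, y)‖ ^ 2) ≤ C / η * η ^ 2 := by
      gcongr
    have h7 : C / η * η ^ 2 = C * η := by field_simp
    have h8 : C * η = ε / 4 := by
      simp only [η]
      field_simp
    simp only [sub_zero, one_smul]
    linarith
  have hI0 : 0 ≤ I 0 := by
    refine le_of_forall_pos_le_add fun ε hε => ?_
    obtain ⟨a, ha, h⟩ := hsmall ε hε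
    linarith [hImono a ha]
  have hS0 : ∀ y, S (0, y) = (ψ y, y) := fun y => by simp [S]
  have hbc : ∀ y, E (0, y) (1, -deriv ψ y) = c := by
    intro y
    have h := hu.bc y
    have hs : 0 < Real.sqrt (1 + deriv ψ y ^ 2) := Real.sqrt_pos.2 (by positivity)
    rw [div_left_inj' hs.ne'] at h
    rw [hEe, hS0, hDe, h]
  have hVb : Continuous fun y => V (0, y) := by fun_prop
  have hI0e : I 0 = c * ((∫ y in (0:ℝ)..1, H (u (ψ y, y))) -
      ∫ y in (0:ℝ)..1, G (u (ψ y, y))) := by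
    have hVu : ∀ y, V (0, y) = u (ψ y, y) := fun y => by rw [hVe, hS0]
    simp only [← hVu]
    rw [← intervalIntegral.integral_sub (Continuous.intervalIntegrable (by fun_prop) 0 1)
      (Continuous.intervalIntegrable (by fun_prop) 0 1), ← intervalIntegral.integral_const_mul]
    refine intervalIntegral.integral_congr fun y _ => ?_
    simp only [f, hbc]
    ring
  rw [hI0e] at hI0
  have := nonneg_of_mul_nonneg_right hI0 hc
  linarith

/-! ### Convexity and approximation of `K` -/

/-- If `K : [0,∞) → ℝ` is continuous, nondecreasing with `0 < K(u) ≤ K_M` for `u > 0`,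
`c > 0`, `ψ ∈ W^{2,∞}(𝕋)` and `u` is a nonnegative classical solution of the temperature
problem for `(c,ψ)`, then `∫_𝕋 K(u(ψ(y),y)) dy ≥ ∫₀¹ K(s) ds`. -/
theorem front_kinetics_integral_lower_bound
    (K : ℝ → ℝ) (KM : ℝ)
    (hKcont : ContinuousOn K (Ici 0)) (hKmono : MonotoneOn K (Ici 0))
    (hKbd : ∀ s : ℝ, 0 < s → 0 < K s ∧ K s ≤ KM)
    (c : ℝ) (ψ : ℝ → ℝ) (u : ℝ × ℝ → ℝ)
    (hc : 0 < c) (hψ : W2infPer ψ) (hu : IsTempSol c ψ u)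
    (hu0 : ∀ p ∈ OmegaCl ψ, 0 ≤ u p) :
    (∫ s in (0:ℝ)..1, K s) ≤ ∫ y in Ico (0:ℝ) 1, K (u (ψ y, y)) := by
  obtain ⟨J, hJe⟩ : ∃ J : ℝ → ℝ, ∀ s, J s = K (max s 0) := ⟨_, fun _ => rfl⟩
  have hJK : ∀ s, 0 ≤ s → J s = K s := fun s hs => by rw [hJe, max_eq_left hs]
  have hJc : Continuous J := (continuous_congr hJe).2 <|
    hKcont.comp_continuous (by fun_prop) fun s => le_max_right s 0
  have hJm : Monotone J := fun s t hst => by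
    rw [hJe, hJe]
    exact hKmono (le_max_right s 0) (le_max_right t 0) (max_le_max_right 0 hst)
  have hJi : ∀ a b, IntervalIntegrable J volume a b := fun a b => hJc.intervalIntegrable a b
  have hmem : ∀ y, (ψ y, y) ∈ OmegaCl ψ := fun y => le_refl (ψ y)
  obtain ⟨v, hve⟩ : ∃ v : ℝ → ℝ, ∀ y, v y = u (ψ y, y) := ⟨_, fun _ => rfl⟩
  have hv : Continuous v := by
    have h1 := hψ.contDiff.continuous
    exact (continuous_congr hve).2 (hu.contOn.comp_continuous (by fun_prop) hmem)
  rw [integral_Ico_eq_integral_Ioc, ← intervalIntegral.integral_of_le zero_le_one]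
  have hR : ∫ y in (0:ℝ)..1, K (u (ψ y, y)) = ∫ y in (0:ℝ)..1, J (v y + 0) :=
    intervalIntegral.integral_congr fun y _ => by
      rw [add_zero, hve, hJK _ (hu0 _ (hmem y))]
  have hLl : ∫ s in (0:ℝ)..1, K s = ∫ s in (0:ℝ)..1, J s :=
    intervalIntegral.integral_congr fun s hs => by
      rw [uIcc_of_le zero_le_one] at hs
      rw [hJK _ hs.1]
  rw [hR, hLl]
  have hlim : Continuous fun ε : ℝ => ∫ y in (0:ℝ)..1, J (v y + ε) :=
    intervalIntegral.continuous_parametric_intervalIntegral_of_continuous'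
      (f := fun ε y => J (v y + ε)) (by fun_prop) 0 1
  refine ge_of_tendsto (hlim.continuousAt.tendsto.mono_left
    (nhdsWithin_le_nhds (s := Ioi 0))) ?_
  filter_upwards [self_mem_nhdsWithin] with ε hε
  have hε : 0 < ε := hε
  -- Steklov average of `J`: a `C¹` nondecreasing function between `J` and `J (· + ε)`
  let A : ℝ → ℝ := fun s => (∫ r in s..(s + ε), J r) / ε
  have hΦ : ∀ s, HasDerivAt (fun s => ∫ r in (0:ℝ)..s, J r) (J s) s := fun s =>
    intervalIntegral.integral_hasDerivAt_right (hJi 0 s)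
      (hJc.stronglyMeasurableAtFilter _ _) hJc.continuousAt
  have hA : ∀ s, HasDerivAt A ((J (s + ε) - J s) / ε) s := by
    intro s
    have hAe : A = fun s => ((∫ r in (0:ℝ)..(s + ε), J r) - ∫ r in (0:ℝ)..s, J r) / ε := by
      ext s
      simp only [A]
      rw [intervalIntegral.integral_interval_sub_left (hJi _ _) (hJi _ _)]
    rw [hAe]
    exact (((hΦ (s + ε)).comp_add_const s ε).sub (hΦ s)).div_const ε
  have hAl : ∀ s, J s ≤ A s := by
    intro s
    rw [le_div_iff₀ hε]
    have := intervalIntegral.integral_mono_on (μ := volume) (by linarith : s ≤ s + ε)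
      (intervalIntegrable_const (c := J s)) (hJi _ _) (fun r hr => hJm hr.1)
    rw [intervalIntegral.integral_const, smul_eq_mul] at this
    linarith
  have hAu : ∀ s, A s ≤ J (s + ε) := by
    intro s
    rw [div_le_iff₀ hε]
    have := intervalIntegral.integral_mono_on (μ := volume) (by linarith : s ≤ s + ε)
      (hJi _ _) (intervalIntegrable_const (c := J (s + ε))) (fun r hr => hJm hr.2)
    rw [intervalIntegral.integral_const, smul_eq_mul] at this
    linarith
  have hAm : Monotone A := monotone_of_hasDerivAt_nonneg hA fun s =>
    div_nonneg (sub_nonneg.2 (hJm (by linarith))) hε.le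
  have hA1 : ContDiff ℝ 1 A := by
    rw [contDiff_one_iff_deriv]
    refine ⟨fun s => (hA s).differentiableAt, ?_⟩
    rw [funext fun s => (hA s).deriv]
    fun_prop
  have hAc : Continuous A := hA1.continuous
  let H : ℝ → ℝ := fun s => A s - A 1
  have hHc : Continuous H := by fun_prop
  let G : ℝ → ℝ := fun s => ∫ r in (0:ℝ)..s, H r
  have hG : ∀ s, HasDerivAt G (H s) s := fun s =>
    intervalIntegral.integral_hasDerivAt_right (hHc.intervalIntegrable 0 s)
      (hHc.stronglyMeasurableAtFilter _ _) hHc.continuousAt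
  have hGc : Continuous G := continuous_iff_continuousAt.2 fun s => (hG s).continuousAt
  have hmain := boundary_ineq hc hψ.contDiff hψ.periodic hu (H := H) (G := G)
    (hA1.sub contDiff_const) (fun s t h => sub_le_sub_right (hAm h) _) hG
    intervalIntegral.integral_same
  simp only [← hve] at hmain
  -- `G` is convex with `G' 1 = 0`, hence minimal at `1`
  have hGmin : ∀ s, G 1 ≤ G s := by
    intro s
    rw [← sub_nonneg]
    have : G s - G 1 = ∫ r in (1:ℝ)..s, H r :=
      intervalIntegral.integral_interval_sub_left (hHc.intervalIntegrable _ _)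
        (hHc.intervalIntegrable _ _)
    rw [this]
    rcases le_total 1 s with h | h
    · exact intervalIntegral.integral_nonneg h fun r hr => sub_nonneg.2 (hAm hr.1)
    · rw [intervalIntegral.integral_symm, ← intervalIntegral.integral_neg]
      exact intervalIntegral.integral_nonneg h fun r hr =>
        neg_nonneg.2 (sub_nonpos.2 (hAm hr.2))
  have h1 : G 1 ≤ ∫ y in (0:ℝ)..1, G (v y) := by
    have := intervalIntegral.integral_mono_on (μ := volume) zero_le_one
      (intervalIntegrable_const (a := 0) (b := 1) (c := G 1))
      (Continuous.intervalIntegrable (hGc.comp hv) 0 1) (fun y _ => hGmin (v y))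
    simpa using this
  have h2 : G 1 = (∫ s in (0:ℝ)..1, A s) - A 1 := by
    simp only [G, H]
    rw [intervalIntegral.integral_sub (hAc.intervalIntegrable _ _) intervalIntegrable_const]
    simp
  have h3 : ∫ y in (0:ℝ)..1, H (v y) = (∫ y in (0:ℝ)..1, A (v y)) - A 1 := by
    simp only [H]
    rw [intervalIntegral.integral_sub (Continuous.intervalIntegrable (by fun_prop) 0 1)
      intervalIntegrable_const]
    simp
  have h4 : ∫ s in (0:ℝ)..1, J s ≤ ∫ s in (0:ℝ)..1, A s :=
    intervalIntegral.integral_mono_on zero_le_one (hJi _ _) (hAc.intervalIntegrable _ _)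
      fun s _ => hAl s
  have h5 : ∫ y in (0:ℝ)..1, A (v y) ≤ ∫ y in (0:ℝ)..1, J (v y + ε) :=
    intervalIntegral.integral_mono_on zero_le_one ((hAc.comp hv).intervalIntegrable _ _)
      (Continuous.intervalIntegrable (by fun_prop) 0 1) fun y _ => hAu (v y)
  linarith
end
end

section
/- Let G : ℝ → ℝ be continuous and let 0 < c₀ ≤ c_M be given. Then there exists α > 0 such that: for every c ∈ ℝ with c₀ ≤ c ≤ c_M, every ψ ∈ W^{2,∞}(𝕋) satisfying |ψ''(y)| ≤ G(ψ'(y)) for almost every y ∈ 𝕋 and min_{y∈𝕋} ψ(y) = 0, and every nonnegative classical solution u of the temperature problem for (c,ψ), one has min_{y∈𝕋} u(0,y) ≥ α. (Uniform positive lower bound for the temperature at the rear of the front.) -/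
/-!
The lower bound comes from comparing `u` with two explicit strict subsolutions of `c vₓ - Δv = 0`
(`comparison`: at a negative minimum of `u - v`, the equation is violated in the interior, and the
Neumann condition is violated on the front).

Let `y₀` be a minimum point of the front, so `ψ y₀ = 0` and `ψ' y₀ = 0`.  The inequality
`|ψ''| ≤ G (ψ')` forces `|ψ'| ≤ 1` for `|y - y₀| ≤ 1 / M`, where `M ≥ 1` exceeds `max G` on
`[-1, 1]` (`slope_bound`).  With `b = 1 / (4 M²)`, consider the disc of radius `2` tangent to
`x = b` at the pole `(b, y₀)`.  It is the superlevel set `{P ≥ 1/4}` of the Poisson kernel `P` of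
the half-plane `x < b`, and it meets `{x ≥ 0}` only where `|y - y₀| ≤ 1 / M`.  Inside it the front
therefore has slope at most one and the closure of `Ω_ψ` stays at distance at least `b / 2` from
the pole (`disc_geometry`).
Since `P` is harmonic with `|∇P| = 1 / |z - (b, y₀)|²`, the function `κ (exp (l P) - exp (l / 4))`
is a strict subsolution in the disc once `l > 16 cM`; it vanishes on the circle, where `u ≥ 0`, and
for `κ` small its derivative along `(1, -ψ')` is less than `c₀` (`disc_bound`).  This bounds `u`
from below on the segment `x = -1`, `|y - y₀| ≤ 1/2`, hence on the whole line `x = -1` by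
periodicity, with constants depending only on `G`, `c₀`, `cM`.

Finally `a exp (-(x + 1))` is a subsolution with negative derivative along `(1, -ψ')`, so the bound
at `x = -1` carries over to `x = 0`, whether or not the front passes nearby (`strip_bound`).
-/

open MeasureTheory Set Filter
open scoped NNReal

noncomputable section

open scoped Topology

/-! ### The slope of the front near its minimum -/

/-- The slope cannot leave `[-1, 1]` within distance `1 / M` of a critical point, because inside
`[-1, 1]` it changes at rate less than `M`. -/
lemma slope_bound (G : ℝ → ℝ) (M : ℝ) (hM : 0 < M) (hGM : ∀ s, |s| ≤ 1 → G s < M)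
    (ψ : ℝ → ℝ) (hψ : W2infPer ψ) (hode : ∀ᵐ y : ℝ, |deriv (deriv ψ) y| ≤ G (deriv ψ y))
    (y₀ : ℝ) (h0 : deriv ψ y₀ = 0) (y : ℝ) (hy : |y - y₀| ≤ 1 / M) : |deriv ψ y| ≤ 1 := by
  obtain ⟨L, hL⟩ := hψ.lipDeriv
  have hcont : Continuous (deriv ψ) := hL.continuous
  -- the slope gained while it stays at most one is bounded by `M` times the length
  have key : ∀ a b : ℝ, (∀ s ∈ uIcc a b, |deriv ψ s| ≤ 1) →
      |deriv ψ b - deriv ψ a| ≤ M * |b - a| := by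
    intro a b hs
    have hac : AbsolutelyContinuousOnInterval (deriv ψ) a b :=
      (hL.lipschitzOnWith (s := uIcc a b)).absolutelyContinuousOnInterval
    rw [← hac.integral_deriv_eq_sub, ← Real.norm_eq_abs]
    apply intervalIntegral.norm_integral_le_of_norm_le_const_ae
    filter_upwards [hode] with s h1 h2
    rw [Real.norm_eq_abs]
    exact h1.trans (hGM _ (hs s (uIoc_subset_uIcc h2))).le
  by_contra! hlt
  set f : ℝ → ℝ := fun t => |deriv ψ (y₀ + t * (y - y₀))| with hf
  have hfc : Continuous f := by fun_prop
  have hf0 : f 0 = 0 := by simp [hf, h0]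
  have hf1 : 1 < f 1 := by simpa [hf] using hlt
  -- `t` is the first time the slope reaches one along the segment from `y₀` to `y`
  have hcomp : IsCompact (Icc (0:ℝ) 1 ∩ {t | 1 ≤ f t}) :=
    isCompact_Icc.inter_right (isClosed_le continuous_const hfc)
  obtain ⟨t, ⟨⟨ht0, ht1⟩, hft⟩, hmin⟩ :=
    hcomp.exists_isLeast ⟨1, ⟨zero_le_one, le_rfl⟩, hf1.le⟩
  have hbefore : ∀ s, 0 ≤ s → s < t → f s < 1 := by
    intro s hs0 hst
    by_contra! h
    exact absurd (hmin ⟨⟨hs0, by linarith⟩, h⟩) (by linarith)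
  have hft1 : f t ≤ 1 := by
    by_contra! h
    obtain ⟨s, hs, hfs⟩ := intermediate_value_Icc ht0 hfc.continuousOn
      (show (1:ℝ) ∈ Icc (f 0) (f t) from ⟨by rw [hf0]; norm_num, h.le⟩)
    have hne : s ≠ t := fun h' => by rw [h'] at hfs; linarith
    have := hbefore s hs.1 (lt_of_le_of_ne hs.2 hne)
    linarith
  have ht1' : t < 1 := lt_of_le_of_ne ht1 fun h => by rw [h] at hft1; linarith
  have hseg := key y₀ (y₀ + t * (y - y₀)) (by
    intro s hs
    rw [← segment_eq_uIcc, segment_eq_image'] at hs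
    obtain ⟨θ, ⟨hθ0, hθ1⟩, rfl⟩ := hs
    have : f (θ * t) ≤ 1 := by
      rcases lt_or_eq_of_le (mul_le_of_le_one_left ht0 hθ1) with h | h
      · exact (hbefore _ (by positivity) h).le
      · rw [h]; exact hft1
    have e : y₀ + θ • (y₀ + t * (y - y₀) - y₀) = y₀ + θ * t * (y - y₀) := by
      simp only [smul_eq_mul]; ring
    change |deriv ψ (y₀ + θ • (y₀ + t * (y - y₀) - y₀))| ≤ 1
    rw [e]; exact this)
  rw [h0, sub_zero, add_sub_cancel_left, abs_mul, abs_of_nonneg ht0] at hseg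
  have h2 : M * |y - y₀| ≤ 1 := by rwa [le_div_iff₀' hM] at hy
  have h3 : M * (t * |y - y₀|) ≤ t := by nlinarith
  change 1 ≤ |deriv ψ (y₀ + t * (y - y₀))| at hft
  linarith

/-! ### The comparison principle -/

/-- Second-order necessary condition at a local minimum, in the direction `e`. -/
lemma second_order (w : ℝ × ℝ → ℝ) (p e : ℝ × ℝ) (hw : ContDiffAt ℝ 2 w p)
    (hmin : IsLocalMin w p) : 0 ≤ fderiv ℝ (fun q => fderiv ℝ w q e) p e := by
  -- otherwise the restriction to the line would also have a local maximum, so be constant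
  by_contra! hneg
  set g : ℝ → ℝ := fun t => w (p + t • e) with hg
  have hl : ∀ t, HasDerivAt (fun t : ℝ => p + t • e) e t := fun t => by
    simpa using ((hasDerivAt_id t).smul_const e).const_add p
  have hlc : Tendsto (fun t : ℝ => p + t • e) (𝓝 0) (𝓝 p) := by
    have := (hl 0).continuousAt.tendsto
    simpa using this
  have hev : ∀ᶠ q in 𝓝 p, ContDiffAt ℝ 2 w q := hw.eventually (by simp)
  have hd : ∀ᶠ t in 𝓝 (0:ℝ), deriv g t = fderiv ℝ w (p + t • e) e := by
    filter_upwards [hlc.eventually hev] with t ht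
    exact ((ht.differentiableAt (by norm_num)).hasFDerivAt.comp_hasDerivAt t (hl t)).deriv
  have hfd : DifferentiableAt ℝ (fun q => fderiv ℝ w q e) p :=
    ((hw.fderiv_right (m := 1) (by norm_num)).differentiableAt (by norm_num)).clm_apply
      (differentiableAt_const _)
  have hdd : deriv (deriv g) 0 = fderiv ℝ (fun q => fderiv ℝ w q e) p e := by
    rw [EventuallyEq.deriv_eq hd]
    have h1 : HasFDerivAt (fun q => fderiv ℝ w q e) (fderiv ℝ (fun q => fderiv ℝ w q e) p)
        (p + (0:ℝ) • e) := by simpa using hfd.hasFDerivAt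
    exact (h1.comp_hasDerivAt 0 (hl 0)).deriv
  have hgmin : IsLocalMin g 0 := by
    have := hlc.eventually hmin
    filter_upwards [this] with t ht
    simpa [hg] using ht
  have hgc : ContinuousAt g 0 := by
    have : ContinuousAt w (p + (0:ℝ) • e) := by simpa using hw.continuousAt
    exact ContinuousAt.comp (f := fun t : ℝ => p + t • e) this (hl 0).continuousAt
  have hgmax : IsLocalMax g 0 :=
    isLocalMax_of_deriv_deriv_neg (hdd ▸ hneg) hgmin.deriv_eq_zero hgc
  have hconst : g =ᶠ[𝓝 0] fun _ => g 0 := by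
    filter_upwards [hgmin, hgmax] with t h1 h2 using le_antisymm h2 h1
  have : deriv (deriv g) 0 = 0 := by
    rw [hconst.deriv.deriv_eq]; simp
  rw [← hdd, this] at hneg
  exact lt_irrefl _ hneg

/-- Comparison with a strict subsolution: if `u - v` attains its minimum over `K`, and every point
of `K` either satisfies `v ≤ u` outright or is relatively interior to `K` in the closure of `Ω_ψ`
with strict inequalities for `v` in the equation and in the front condition, then `v ≤ u` on `K`.
Attainment replaces compactness so that the lemma also covers a region unbounded in `y`. -/
lemma comparison {c : ℝ} {ψ : ℝ → ℝ} {u : ℝ × ℝ → ℝ} (hψ : W2infPer ψ) (hu : IsTempSol c ψ u)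
    (v : ℝ × ℝ → ℝ) (K : Set (ℝ × ℝ))
    (hmin : ∃ p ∈ K, ∀ q ∈ K, u p - v p ≤ u q - v q)
    (hK : ∀ p ∈ K, v p ≤ u p ∨ (p ∈ OmegaCl ψ ∧ K ∈ 𝓝[OmegaCl ψ] p ∧ ContDiffAt ℝ 2 v p ∧
      c * pdx v p < lap v p ∧ (p.1 = ψ p.2 → fderiv ℝ v p (1, -deriv ψ p.2) < c))) :
    ∀ p ∈ K, v p ≤ u p := by
  obtain ⟨p, hpK, hp⟩ := hmin
  suffices h : v p ≤ u p by
    intro q hq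
    have := hp q hq
    linarith
  rcases hK p hpK with h | ⟨hpO, hnb, hv, hsub, hb⟩
  · exact h
  exfalso
  have hψc : Continuous ψ := hψ.contDiff.continuous
  rcases lt_or_eq_of_le (show p.1 ≤ ψ p.2 from hpO) with hlt | heq
  · have hopen : IsOpen (Omega ψ) :=
      isOpen_lt continuous_fst (hψc.comp continuous_snd)
    have hOn : Omega ψ ∈ 𝓝 p := hopen.mem_nhds hlt
    have hcl : OmegaCl ψ ∈ 𝓝 p := mem_of_superset hOn fun q hq => show q.1 ≤ ψ q.2 from le_of_lt hq
    have hKn : K ∈ 𝓝 p := by rwa [nhdsWithin_eq_nhds.2 hcl] at hnb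
    have huc : ContDiffAt ℝ 2 u p := hu.c2.contDiffAt hOn
    have hmin : IsLocalMin (u - v) p := by
      filter_upwards [hKn] with q hq using hp q hq
    have hw : ContDiffAt ℝ 2 (u - v) p := huc.sub hv
    have h1 := second_order _ p (1, 0) hw hmin
    have h2 := second_order _ p (0, 1) hw hmin
    have h3 : pdx u p - pdx v p = 0 := by
      have := hmin.fderiv_eq_zero
      rw [fderiv_sub (huc.differentiableAt (by norm_num)) (hv.differentiableAt (by norm_num))]
        at this
      exact congrArg (fun l : (ℝ × ℝ) →L[ℝ] ℝ => l (1, 0)) this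
    have hsplit : ∀ e : ℝ × ℝ, fderiv ℝ (fun q => fderiv ℝ (u - v) q e) p e =
        fderiv ℝ (fun q => fderiv ℝ u q e) p e - fderiv ℝ (fun q => fderiv ℝ v q e) p e := by
      intro e
      have hE : (fun q => fderiv ℝ (u - v) q e) =ᶠ[𝓝 p]
          (fun q => fderiv ℝ u q e) - (fun q => fderiv ℝ v q e) := by
        filter_upwards [huc.eventually (by simp), hv.eventually (by simp)] with q ha hb
        rw [fderiv_sub (ha.differentiableAt (by norm_num)) (hb.differentiableAt (by norm_num))]
        rfl
      have hd : ∀ f : ℝ × ℝ → ℝ, ContDiffAt ℝ 2 f p →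
          DifferentiableAt ℝ (fun q => fderiv ℝ f q e) p := fun f hf =>
        ((hf.fderiv_right (m := 1) (by norm_num)).differentiableAt (by norm_num)).clm_apply
          (differentiableAt_const _)
      rw [hE.fderiv_eq, fderiv_sub (hd u huc) (hd v hv)]
      rfl
    rw [hsplit] at h1 h2
    have h4 := hu.pde p hlt
    have h5 : pdx u p = pdx v p := by linarith
    rw [h5] at h4
    have h6 : lap u p = fderiv ℝ (fun q => fderiv ℝ u q (1, 0)) p (1, 0)
      + fderiv ℝ (fun q => fderiv ℝ u q (0, 1)) p (0, 1) := rfl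
    have h7 : lap v p = fderiv ℝ (fun q => fderiv ℝ v q (1, 0)) p (1, 0)
      + fderiv ℝ (fun q => fderiv ℝ v q (0, 1)) p (0, 1) := rfl
    linarith
  · obtain ⟨x, y⟩ := p
    simp only at heq
    subst heq
    set d := deriv ψ y with hd
    set q : ℝ → ℝ × ℝ := fun t => (ψ y, y) - t • ((1, -d) : ℝ × ℝ) with hq
    have hqd : HasDerivAt q (-(1, -d)) 0 := by
      have := ((hasDerivAt_id (0:ℝ)).smul_const ((1, -d) : ℝ × ℝ)).const_sub (ψ y, y)
      rwa [one_smul] at this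
    have hq0 : q 0 = (ψ y, y) := by simp [hq]
    -- the ray in the inward normal direction stays inside the fresh region for a short while
    have hin : ∀ᶠ t in 𝓝[>] (0:ℝ), q t ∈ OmegaCl ψ := by
      have hh : HasDerivAt (fun t : ℝ => ψ (y + t * d) + t) (d * d + 1) 0 := by
        have h1 : HasDerivAt (fun t : ℝ => y + t * d) d 0 := by
          simpa using ((hasDerivAt_id (0:ℝ)).mul_const d).const_add y
        have h2 : HasDerivAt ψ d (y + 0 * d) := by
          simpa [hd] using (hψ.contDiff.differentiable (by norm_num) y).hasDerivAt
        exact (h2.comp (0:ℝ) h1).add (hasDerivAt_id (0:ℝ))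
      have h3 := (hasDerivWithinAt_iff_tendsto_slope' (s := Ioi (0:ℝ)) (by simp)).1
        hh.hasDerivWithinAt
      have h4 := h3.eventually (lt_mem_nhds (show (0:ℝ) < d * d + 1 by nlinarith [mul_self_nonneg d]))
      filter_upwards [h4, self_mem_nhdsWithin] with t ht ht0
      rw [slope_def_field, lt_div_iff₀ (by simpa using ht0)] at ht
      simp only [zero_mul, add_zero] at ht
      simp only [hq, OmegaCl, mem_ofPred_eq, Prod.smul_mk, Prod.mk_sub_mk, smul_eq_mul]
      have : y - t * -d = y + t * d := by ring
      rw [this]; linarith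
    have hbc : fderivWithin ℝ u (OmegaCl ψ) (ψ y, y) (1, -d) = c := by
      have := hu.bc y
      have hs : Real.sqrt (1 + deriv ψ y ^ 2) ≠ 0 := by positivity
      rwa [div_left_inj' hs] at this
    have hqt : Tendsto q (𝓝[>] 0) (𝓝[OmegaCl ψ] (ψ y, y)) := by
      refine tendsto_nhdsWithin_iff.2 ⟨?_, hin⟩
      have := hqd.continuousAt.tendsto
      rw [hq0] at this
      exact this.mono_left nhdsWithin_le_nhds
    have hud : HasDerivWithinAt (fun t => u (q t)) (-c) (Ioi 0) 0 := by
      have h1 : HasFDerivWithinAt u (fderivWithin ℝ u (OmegaCl ψ) (ψ y, y)) (OmegaCl ψ) (q 0) := by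
        rw [hq0]
        exact ((hu.c1.differentiableOn (by norm_num)) _ hpO).hasFDerivWithinAt
      have h2 := h1.comp_hasDerivWithinAt (s := q ⁻¹' OmegaCl ψ) (0:ℝ) hqd.hasDerivWithinAt
        (fun t ht => ht)
      rw [map_neg, hbc] at h2
      exact h2.mono_of_mem_nhdsWithin hin
    have hvd : HasDerivWithinAt (fun t => v (q t)) (-fderiv ℝ v (ψ y, y) (1, -d)) (Ioi 0) 0 := by
      have h1 : HasFDerivAt v (fderiv ℝ v (ψ y, y)) (q 0) := by
        rw [hq0]
        exact (hv.differentiableAt (by norm_num)).hasFDerivAt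
      have h2 := h1.comp_hasDerivAt (0:ℝ) hqd
      rw [map_neg] at h2
      exact h2.hasDerivWithinAt
    have hb' := hb rfl
    have h3 := (hasDerivWithinAt_iff_tendsto_slope' (s := Ioi (0:ℝ)) (by simp)).1 (hud.sub hvd)
    have h4 := h3.eventually (gt_mem_nhds
      (show -c - -fderiv ℝ v (ψ y, y) (1, -d) < 0 by linarith))
    obtain ⟨t, ht, htK, ht0⟩ := (h4.and ((hqt.eventually hnb).and self_mem_nhdsWithin)).exists
    have h5 := hp (q t) htK
    rw [slope_def_field, div_lt_iff₀ (by simpa using ht0)] at ht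
    simp only [Pi.sub_apply, hq0] at ht
    linarith

/-! ### The Poisson-kernel barrier -/

lemma partials {U : Set (ℝ × ℝ)} {f A B : ℝ × ℝ → ℝ}
    (hf : ∀ p ∈ U, DifferentiableAt ℝ f p)
    (hA : ∀ p ∈ U, HasDerivAt (fun x => f (x, p.2)) (A p) p.1)
    (hB : ∀ p ∈ U, HasDerivAt (fun y => f (p.1, y)) (B p) p.2) :
    ∀ p ∈ U, pdx f p = A p ∧ pdy f p = B p := by
  intro p hp
  have h1 : HasDerivAt (fun x : ℝ => (x, p.2)) ((1, 0) : ℝ × ℝ) p.1 :=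
    (hasDerivAt_id p.1).prodMk (hasDerivAt_const p.1 p.2)
  have h2 : HasDerivAt (fun y : ℝ => (p.1, y)) ((0, 1) : ℝ × ℝ) p.2 :=
    (hasDerivAt_const p.2 p.1).prodMk (hasDerivAt_id p.2)
  have hd : HasFDerivAt f (fderiv ℝ f p) (p.1, p.2) := (hf p hp).hasFDerivAt
  exact ⟨(hd.comp_hasDerivAt p.1 h1).unique (hA p hp),
    (hd.comp_hasDerivAt p.2 h2).unique (hB p hp)⟩

lemma lap_eq {U : Set (ℝ × ℝ)} (hU : IsOpen U) {f A B Ax By : ℝ × ℝ → ℝ}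
    (hf : ContDiffOn ℝ 2 f U)
    (hA : ∀ p ∈ U, HasDerivAt (fun x => f (x, p.2)) (A p) p.1)
    (hB : ∀ p ∈ U, HasDerivAt (fun y => f (p.1, y)) (B p) p.2)
    (hAx : ∀ p ∈ U, HasDerivAt (fun x => A (x, p.2)) (Ax p) p.1)
    (hBy : ∀ p ∈ U, HasDerivAt (fun y => B (p.1, y)) (By p) p.2) :
    ∀ p ∈ U, pdx f p = A p ∧ pdy f p = B p ∧ lap f p = Ax p + By p := by
  intro p hp
  have hfp : ∀ q ∈ U, ContDiffAt ℝ 2 f q := fun q hq => hf.contDiffAt (hU.mem_nhds hq)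
  have h1 := partials (fun q hq => (hfp q hq).differentiableAt (by norm_num)) hA hB
  have hd : ∀ e : ℝ × ℝ, DifferentiableAt ℝ (fun q => fderiv ℝ f q e) p := fun e =>
    (((hfp p hp).fderiv_right (m := 1) (by norm_num)).differentiableAt (by norm_num)).clm_apply
      (differentiableAt_const _)
  have l1 : HasDerivAt (fun x : ℝ => (x, p.2)) ((1, 0) : ℝ × ℝ) p.1 :=
    (hasDerivAt_id p.1).prodMk (hasDerivAt_const p.1 p.2)
  have l2 : HasDerivAt (fun y : ℝ => (p.1, y)) ((0, 1) : ℝ × ℝ) p.2 :=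
    (hasDerivAt_const p.2 p.1).prodMk (hasDerivAt_id p.2)
  have e1 : pdx f =ᶠ[𝓝 p] A := by
    filter_upwards [hU.mem_nhds hp] with q hq using (h1 q hq).1
  have e2 : pdy f =ᶠ[𝓝 p] B := by
    filter_upwards [hU.mem_nhds hp] with q hq using (h1 q hq).2
  have d1 : HasFDerivAt A (fderiv ℝ (pdx f) p) (p.1, p.2) :=
    (hd (1, 0)).hasFDerivAt.congr_of_eventuallyEq e1.symm
  have d2 : HasFDerivAt B (fderiv ℝ (pdy f) p) (p.1, p.2) :=
    (hd (0, 1)).hasFDerivAt.congr_of_eventuallyEq e2.symm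
  refine ⟨(h1 p hp).1, (h1 p hp).2, ?_⟩
  have := (d1.comp_hasDerivAt p.1 l1).unique (hAx p hp)
  have := (d2.comp_hasDerivAt p.2 l2).unique (hBy p hp)
  unfold lap
  change fderiv ℝ (pdx f) p (1, 0) + fderiv ℝ (pdy f) p (0, 1) = _
  linarith

lemma fderiv_apply_pair (f : ℝ × ℝ → ℝ) (p : ℝ × ℝ) (d : ℝ) :
    fderiv ℝ f p (1, -d) = pdx f p - d * pdy f p := by
  have : ((1, -d) : ℝ × ℝ) = (1, 0) - d • ((0, 1) : ℝ × ℝ) := by simp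
  rw [this, map_sub, map_smul]; rfl

/-- The Poisson kernel of the half-plane `x < b`, with its pole at `(b, y₀)`. -/
def poisson (b y₀ : ℝ) (p : ℝ × ℝ) : ℝ := (b - p.1) / ((b - p.1) ^ 2 + (p.2 - y₀) ^ 2)

/-- The barrier: an exponential of the Poisson kernel, vanishing on the circle `P = 1/4`. -/
def barrier (κ l b y₀ : ℝ) (p : ℝ × ℝ) : ℝ :=
  κ * (Real.exp (l * poisson b y₀ p) - Real.exp (l / 4))

/-- The squared distance to the pole `(b, y₀)`. -/
def sqd (b y₀ : ℝ) (p : ℝ × ℝ) : ℝ := (b - p.1) ^ 2 + (p.2 - y₀) ^ 2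

lemma continuous_sqd (b y₀ : ℝ) : Continuous (sqd b y₀) := by unfold sqd; fun_prop

lemma barrier_contDiffAt (κ l b y₀ : ℝ) (p : ℝ × ℝ) (hp : 0 < sqd b y₀ p) :
    ContDiffAt ℝ 2 (barrier κ l b y₀) p := by
  have : (b - p.1) ^ 2 + (p.2 - y₀) ^ 2 ≠ 0 := hp.ne'
  unfold barrier poisson
  fun_prop (disch := assumption)

/-- The Laplacian has no first-order term in `l` because the Poisson kernel is harmonic. -/
lemma barrier_derivs (κ l b y₀ : ℝ) (p : ℝ × ℝ) (hp : 0 < sqd b y₀ p) :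
    pdx (barrier κ l b y₀) p = κ * (Real.exp (l * poisson b y₀ p) *
        (l * (((b - p.1) ^ 2 - (p.2 - y₀) ^ 2) / sqd b y₀ p ^ 2))) ∧
    pdy (barrier κ l b y₀) p = κ * (Real.exp (l * poisson b y₀ p) *
        (l * (-2 * (b - p.1) * (p.2 - y₀) / sqd b y₀ p ^ 2))) ∧
    lap (barrier κ l b y₀) p =
      κ * (Real.exp (l * poisson b y₀ p) * (l ^ 2 / sqd b y₀ p ^ 2)) := by
  have hU : IsOpen {p | 0 < sqd b y₀ p} := isOpen_lt continuous_const (continuous_sqd b y₀)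
  have hX : ∀ q ∈ {p | 0 < sqd b y₀ p}, HasDerivAt (fun x => poisson b y₀ (x, q.2))
      (((b - q.1) ^ 2 - (q.2 - y₀) ^ 2) / sqd b y₀ q ^ 2) q.1 := by
    rintro ⟨x, y⟩ hq
    have hq' : (b - x) ^ 2 + (y - y₀) ^ 2 ≠ 0 := ne_of_gt hq
    have h1 := (hasDerivAt_id x).const_sub b
    have h2 := h1.div ((h1.pow 2).add_const ((y - y₀) ^ 2)) hq'
    refine HasDerivAt.congr_deriv h2 ?_
    simp only [sqd, id, Pi.pow_apply]
    congr 1; push_cast; ring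
  have hY : ∀ q ∈ {p | 0 < sqd b y₀ p}, HasDerivAt (fun y => poisson b y₀ (q.1, y))
      (-2 * (b - q.1) * (q.2 - y₀) / sqd b y₀ q ^ 2) q.2 := by
    rintro ⟨x, y⟩ hq
    have hq' : (b - x) ^ 2 + (y - y₀) ^ 2 ≠ 0 := ne_of_gt hq
    have h1 := (hasDerivAt_id y).sub_const y₀
    have h2 := (hasDerivAt_const y (b - x)).div ((h1.pow 2).const_add ((b - x) ^ 2)) hq'
    refine HasDerivAt.congr_deriv h2 ?_
    simp only [sqd, id, Pi.pow_apply]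
    congr 1; push_cast; ring
  have hXX : ∀ q ∈ {p | 0 < sqd b y₀ p}, HasDerivAt
      (fun x => ((b - x) ^ 2 - (q.2 - y₀) ^ 2) / sqd b y₀ (x, q.2) ^ 2)
      ((2 * (b - q.1) ^ 3 - 6 * (b - q.1) * (q.2 - y₀) ^ 2) / sqd b y₀ q ^ 3) q.1 := by
    rintro ⟨x, y⟩ hq
    have hq' : (b - x) ^ 2 + (y - y₀) ^ 2 ≠ 0 := ne_of_gt hq
    have h1 := (hasDerivAt_id x).const_sub b
    have h2 := ((h1.pow 2).sub_const ((y - y₀) ^ 2)).div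
      (((h1.pow 2).add_const ((y - y₀) ^ 2)).pow 2) (pow_ne_zero 2 hq')
    refine HasDerivAt.congr_deriv h2 ?_
    simp only [sqd, id, Pi.pow_apply]
    rw [div_eq_div_iff (pow_ne_zero 2 (pow_ne_zero 2 hq')) (pow_ne_zero 3 hq')]
    push_cast; ring
  have hYY : ∀ q ∈ {p | 0 < sqd b y₀ p}, HasDerivAt
      (fun y => -2 * (b - q.1) * (y - y₀) / sqd b y₀ (q.1, y) ^ 2)
      (-(2 * (b - q.1) ^ 3 - 6 * (b - q.1) * (q.2 - y₀) ^ 2) / sqd b y₀ q ^ 3) q.2 := by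
    rintro ⟨x, y⟩ hq
    have hq' : (b - x) ^ 2 + (y - y₀) ^ 2 ≠ 0 := ne_of_gt hq
    have h1 := (hasDerivAt_id y).sub_const y₀
    have h2 := (h1.const_mul (-2 * (b - x))).div
      (((h1.pow 2).const_add ((b - x) ^ 2)).pow 2) (pow_ne_zero 2 hq')
    refine HasDerivAt.congr_deriv h2 ?_
    simp only [sqd, id, Pi.pow_apply]
    rw [div_eq_div_iff (pow_ne_zero 2 (pow_ne_zero 2 hq')) (pow_ne_zero 3 hq')]
    push_cast; ring
  have main := lap_eq hU (f := barrier κ l b y₀)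
    (A := fun q => κ * (Real.exp (l * poisson b y₀ q) *
        (l * (((b - q.1) ^ 2 - (q.2 - y₀) ^ 2) / sqd b y₀ q ^ 2))))
    (B := fun q => κ * (Real.exp (l * poisson b y₀ q) *
        (l * (-2 * (b - q.1) * (q.2 - y₀) / sqd b y₀ q ^ 2))))
    (fun q hq => (barrier_contDiffAt κ l b y₀ q hq).contDiffWithinAt)
    (fun q hq => ((((hX q hq).const_mul l).exp).sub_const _).const_mul κ)
    (fun q hq => ((((hY q hq).const_mul l).exp).sub_const _).const_mul κ)
    (fun q hq => ((((hX q hq).const_mul l).exp).mul ((hXX q hq).const_mul l)).const_mul κ)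
    (fun q hq => ((((hY q hq).const_mul l).exp).mul ((hYY q hq).const_mul l)).const_mul κ) p hp
  refine ⟨main.1, main.2.1, main.2.2.trans ?_⟩
  have hne : sqd b y₀ p ≠ 0 := ne_of_gt hp
  -- the squared gradient of the Poisson kernel is `1 / sqd ^ 2`
  have hg : (((b - p.1) ^ 2 - (p.2 - y₀) ^ 2) / sqd b y₀ p ^ 2) ^ 2 +
      (-2 * (b - p.1) * (p.2 - y₀) / sqd b y₀ p ^ 2) ^ 2 = 1 / sqd b y₀ p ^ 2 := by
    field_simp
    unfold sqd; ring
  have hp' : (p.1, p.2) = p := rfl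
  simp only [hp']
  linear_combination (κ * Real.exp (l * poisson b y₀ p) * l ^ 2) * hg

/-! ### Lower bounds from the two barriers -/

/-- In the disc `{P ≥ 1/4}`, the points on or behind the front stay at distance at least `b / 2`
from the pole, and those with `x ≥ 0` satisfy `|y - y₀| ≤ 1 / M`, where the front has slope at
most one. -/
lemma disc_geometry {M b y₀ : ℝ} {ψ : ℝ → ℝ} (hM : 1 ≤ M) (hb : b = 1 / (4 * M ^ 2))
    (hψ : W2infPer ψ) (h0 : ψ y₀ = 0) (hs : ∀ y, |y - y₀| ≤ 1 / M → |deriv ψ y| ≤ 1)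
    (p : ℝ × ℝ) (hp : p.1 ≤ ψ p.2) (hd : sqd b y₀ p ≤ 4 * (b - p.1)) :
    (b / 2) ^ 2 ≤ sqd b y₀ p ∧ (0 ≤ p.1 → |p.2 - y₀| ≤ 1 / M) := by
  have hM0 : 0 < M := by linarith
  have hbpos : 0 < b := by rw [hb]; positivity
  have hbM : 4 * b = (1 / M) ^ 2 := by rw [hb]; field_simp
  have hM1 : 1 / M ≤ 1 := by rw [div_le_one hM0]; exact hM
  have hMpos : 0 < 1 / M := by positivity
  unfold sqd at *
  constructor
  · by_contra! hlt
    have hy : |p.2 - y₀| < b / 2 := by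
      apply abs_lt_of_sq_lt_sq _ (by positivity)
      nlinarith [sq_nonneg (b - p.1)]
    have hx : |b - p.1| < b / 2 := by
      apply abs_lt_of_sq_lt_sq _ (by positivity)
      nlinarith [sq_nonneg (p.2 - y₀)]
    have hbd : b / 2 ≤ 1 / M := by nlinarith
    have hlip := (convex_closedBall y₀ (1 / M)).norm_image_sub_le_of_norm_deriv_le
      (f := ψ) (C := 1) (x := y₀) (y := p.2)
      (fun z _ => hψ.contDiff.differentiable (by norm_num) z)
      (fun z hz => hs z (by simpa [Real.dist_eq] using hz))
      (by simpa using hMpos.le)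
      (by rw [Metric.mem_closedBall, Real.dist_eq]; linarith)
    rw [h0, sub_zero, Real.norm_eq_abs, Real.norm_eq_abs, one_mul] at hlip
    have := le_abs_self (ψ p.2)
    have := le_abs_self (b - p.1)
    linarith
  · intro hx
    apply abs_le_of_sq_le_sq _ hMpos.le
    nlinarith [sq_nonneg (b - p.1)]

/-- The barrier stays below the temperature in the disc.  The value of `κ` makes the derivative of
the barrier along `(1, -ψ')` at most `c₀ / 2` on the front. -/
lemma disc_bound {c c₀ cM M b l κ y₀ : ℝ} {ψ : ℝ → ℝ} {u : ℝ × ℝ → ℝ}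
    (hc₀ : 0 < c₀) (hc : c₀ ≤ c) (hcM : c ≤ cM) (hM : 1 ≤ M) (hb : b = 1 / (4 * M ^ 2))
    (hl : l = 16 * cM + 1) (hκ : κ = c₀ * (b / 2) ^ 2 * Real.exp (-(l / (b / 2))) / (4 * l))
    (hψ : W2infPer ψ) (hψ0 : ∀ y, 0 ≤ ψ y) (h0 : ψ y₀ = 0)
    (hs : ∀ y, |y - y₀| ≤ 1 / M → |deriv ψ y| ≤ 1)
    (hu : IsTempSol c ψ u) (hpos : ∀ p ∈ OmegaCl ψ, 0 ≤ u p) :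
    ∀ p ∈ OmegaCl ψ ∩ {p | sqd b y₀ p ≤ 4 * (b - p.1)}, barrier κ l b y₀ p ≤ u p := by
  have hbpos : 0 < b := by
    have : 0 < M := by linarith
    rw [hb]; positivity
  have hr : 0 < b / 2 := by positivity
  have hlpos : 0 < l := by rw [hl]; linarith
  have hκpos : 0 < κ := by rw [hκ]; positivity
  have hψc : Continuous ψ := hψ.contDiff.continuous
  set K : Set (ℝ × ℝ) := OmegaCl ψ ∩ {p | sqd b y₀ p ≤ 4 * (b - p.1)} with hKdef
  have hgeo : ∀ p ∈ K, (b / 2) ^ 2 ≤ sqd b y₀ p ∧ (0 ≤ p.1 → |p.2 - y₀| ≤ 1 / M) :=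
    fun p hp => disc_geometry hM hb hψ h0 hs p hp.1 hp.2
  have hsq : ∀ p ∈ K, 0 < sqd b y₀ p := fun p hp =>
    lt_of_lt_of_le (by positivity) (hgeo p hp).1
  have hKclosed : IsClosed K :=
    (isClosed_le continuous_fst (hψc.comp continuous_snd)).inter
      (isClosed_le (continuous_sqd b y₀) (by fun_prop))
  have hKbox : K ⊆ Icc (b - 4) b ×ˢ Icc (y₀ - 4) (y₀ + 4) := by
    rintro ⟨x, y⟩ ⟨-, h⟩
    have h' : (b - x) ^ 2 + (y - y₀) ^ 2 ≤ 4 * (b - x) := h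
    refine ⟨⟨?_, ?_⟩, ⟨?_, ?_⟩⟩ <;> dsimp only <;>
      nlinarith [sq_nonneg (b - x), sq_nonneg (y - y₀), sq_nonneg (b - x - 2)]
  have hKc : IsCompact K := (isCompact_Icc.prod isCompact_Icc).of_isClosed_subset hKclosed hKbox
  have hKne : K.Nonempty := by
    refine ⟨(b - 1, y₀), ?_, ?_⟩
    · have : b ≤ 1 := by
        rw [hb, div_le_one (by positivity)]; nlinarith
      exact (by linarith [hψ0 y₀] : b - 1 ≤ ψ y₀)
    · change (b - (b - 1)) ^ 2 + (y₀ - y₀) ^ 2 ≤ 4 * (b - (b - 1))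
      norm_num
  have hcont : ContinuousOn (fun p => u p - barrier κ l b y₀ p) K :=
    (hu.contOn.mono inter_subset_left).sub fun p hp =>
      (barrier_contDiffAt κ l b y₀ p (hsq p hp)).continuousAt.continuousWithinAt
  apply comparison hψ hu
  · obtain ⟨p, hp, h⟩ := hKc.exists_isMinOn hKne hcont
    exact ⟨p, hp, fun q hq => h hq⟩
  intro p hp
  have hD := hsq p hp
  rcases lt_or_eq_of_le (show sqd b y₀ p ≤ 4 * (b - p.1) from hp.2) with hlt | heq
  swap
  · -- the barrier vanishes on the circle
    left
    have h1 : poisson b y₀ p = 1 / 4 := by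
      change (b - p.1) / sqd b y₀ p = 1 / 4
      rw [div_eq_div_iff hD.ne' (by norm_num)]; linarith
    have h2 : barrier κ l b y₀ p = 0 := by
      unfold barrier
      rw [h1, mul_one_div, sub_self, mul_zero]
    rw [h2]; exact hpos p hp.1
  right
  obtain ⟨hd1, hd2, hd3⟩ := barrier_derivs κ l b y₀ p hD
  have hX : 0 < b - p.1 := by linarith
  have hDdef : sqd b y₀ p = (b - p.1) ^ 2 + (p.2 - y₀) ^ 2 := rfl
  have hr2 := (hgeo p hp).1
  refine ⟨hp.1, ?_, barrier_contDiffAt κ l b y₀ p hD, ?_, ?_⟩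
  · refine inter_mem self_mem_nhdsWithin (mem_nhdsWithin_of_mem_nhds ?_)
    have : ∀ᶠ q in 𝓝 p, sqd b y₀ q < 4 * (b - q.1) :=
      (continuous_sqd b y₀).continuousAt.eventually_lt (by fun_prop) hlt
    filter_upwards [this] with q hq using hq.le
  · rw [hd1, hd3]
    have hE : 0 < κ * Real.exp (l * poisson b y₀ p) * l / sqd b y₀ p ^ 2 := by positivity
    have h4 : b - p.1 ≤ 4 := by nlinarith [sq_nonneg (p.2 - y₀)]
    have hxy : c * ((b - p.1) ^ 2 - (p.2 - y₀) ^ 2) < l := by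
      have h1 : (b - p.1) ^ 2 - (p.2 - y₀) ^ 2 ≤ 16 := by nlinarith [sq_nonneg (p.2 - y₀)]
      have h2 : c * ((b - p.1) ^ 2 - (p.2 - y₀) ^ 2) ≤ c * 16 :=
        mul_le_mul_of_nonneg_left h1 (by linarith)
      rw [hl]; linarith
    have := mul_lt_mul_of_pos_left hxy hE
    calc _ = κ * Real.exp (l * poisson b y₀ p) * l / sqd b y₀ p ^ 2 *
          (c * ((b - p.1) ^ 2 - (p.2 - y₀) ^ 2)) := by ring
      _ < _ := this
      _ = _ := by ring
  · intro hfront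
    have hp1 : 0 ≤ p.1 := by rw [hfront]; exact hψ0 _
    have hslope : |deriv ψ p.2| ≤ 1 := hs _ ((hgeo p hp).2 hp1)
    rw [fderiv_apply_pair, hd1, hd2]
    set d := deriv ψ p.2
    set X := b - p.1 with hXd
    set Y := p.2 - y₀ with hYd
    set D := sqd b y₀ p with hDd
    -- the kernel is at most the inverse distance to the pole
    have hP : poisson b y₀ p ≤ 1 / (b / 2) := by
      change X / D ≤ _
      rw [div_le_div_iff₀ hD hr]
      nlinarith [sq_nonneg (X - b / 2), sq_nonneg Y]
    have hexp : Real.exp (l * poisson b y₀ p) ≤ Real.exp (l / (b / 2)) := by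
      apply Real.exp_le_exp.2
      calc l * poisson b y₀ p ≤ l * (1 / (b / 2)) := mul_le_mul_of_nonneg_left hP hlpos.le
        _ = _ := by ring
    have hdir : (X ^ 2 - Y ^ 2) - d * (-2 * X * Y) ≤ 2 * D := by
      obtain ⟨h1, h2⟩ := abs_le.1 hslope
      rw [show D = X ^ 2 + Y ^ 2 from rfl]
      clear_value X Y d
      clear * - h1 h2
      nlinarith [mul_nonneg (sub_nonneg.2 h2) (sq_nonneg (X - Y)),
        mul_nonneg (show 0 ≤ d + 1 by linarith) (sq_nonneg (X + Y)), sq_nonneg X, sq_nonneg Y]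
    have hdir2 : ((X ^ 2 - Y ^ 2) - d * (-2 * X * Y)) / D ^ 2 ≤ 2 / (b / 2) ^ 2 := by
      calc _ ≤ 2 * D / D ^ 2 := by gcongr
        _ = 2 / D := by field_simp
        _ ≤ _ := by gcongr
    calc _ = κ * l * Real.exp (l * poisson b y₀ p) *
          (((X ^ 2 - Y ^ 2) - d * (-2 * X * Y)) / D ^ 2) := by ring
      _ ≤ κ * l * Real.exp (l * poisson b y₀ p) * (2 / (b / 2) ^ 2) := by gcongr
      _ ≤ κ * l * Real.exp (l / (b / 2)) * (2 / (b / 2) ^ 2) := by gcongr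
      _ = c₀ / 2 := by
        rw [hκ, Real.exp_neg]
        have := (Real.exp_pos (l / (b / 2))).ne'
        field_simp
        norm_num
      _ < c := by linarith

/-- A lower bound on the line `x = -1` propagates up to the line `x = 0`: the convex decreasing
profile `a * exp (-(x + 1))` is a strict subsolution whose outward normal derivative
on the front is negative. -/
lemma strip_bound {c a : ℝ} {ψ : ℝ → ℝ} {u : ℝ × ℝ → ℝ} (hc : 0 < c) (ha : 0 < a)
    (hψ : W2infPer ψ) (hψ0 : ∀ y, 0 ≤ ψ y) (hu : IsTempSol c ψ u)
    (hline : ∀ y, a ≤ u (-1, y)) (y : ℝ) : a * Real.exp (-1) ≤ u (0, y) := by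
  set v : ℝ × ℝ → ℝ := fun p => a * Real.exp (-(p.1 + 1)) with hv
  have hψc : Continuous ψ := hψ.contDiff.continuous
  have hvs : ContDiff ℝ 2 v := by fun_prop
  have hexp : ∀ (k x : ℝ), HasDerivAt (fun x => k * Real.exp (-(x + 1)))
      (-k * Real.exp (-(x + 1))) x := by
    intro k x
    have := (((hasDerivAt_id x).add_const (1:ℝ)).neg.exp).const_mul k
    refine this.congr_deriv ?_
    simp
  have hder := lap_eq isOpen_univ (f := v) (A := fun p => -a * Real.exp (-(p.1 + 1)))
    (B := fun _ => 0) (Ax := fun p => -(-a) * Real.exp (-(p.1 + 1))) (By := fun _ => 0)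
    hvs.contDiffOn (fun p _ => hexp a p.1) (fun p _ => hasDerivAt_const p.2 (v p))
    (fun p _ => hexp (-a) p.1) (fun p _ => hasDerivAt_const _ _)
  set K : Set (ℝ × ℝ) := OmegaCl ψ ∩ {p | -1 ≤ p.1} with hK
  have key : ∀ p ∈ K, v p ≤ u p := by
    apply comparison hψ hu
    · -- by periodicity, minimizing over one period suffices
      obtain ⟨B, hB⟩ := (isCompact_Icc (a := (0:ℝ)) (b := 1)).exists_bound_of_continuousOn
        hψc.continuousOn
      have hK0c : IsCompact (K ∩ {p | p.2 ∈ Icc (0:ℝ) 1}) := by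
        refine (isCompact_Icc (a := (-1:ℝ)) (b := B)).prod
          (isCompact_Icc (a := (0:ℝ)) (b := 1)) |>.of_isClosed_subset ?_ ?_
        · exact ((isClosed_le continuous_fst (hψc.comp continuous_snd)).inter
            (isClosed_le continuous_const continuous_fst)).inter
            (isClosed_Icc.preimage continuous_snd)
        · rintro p ⟨⟨h1, h2⟩, h3⟩
          exact ⟨⟨h2, le_trans h1 ((le_abs_self _).trans (hB _ h3))⟩, h3⟩
      obtain ⟨p, hp, hmin⟩ := hK0c.exists_isMinOn (f := fun p => u p - v p)
        ⟨(0, 0), ⟨hψ0 0, show (-1:ℝ) ≤ 0 by norm_num⟩, ⟨le_rfl, zero_le_one⟩⟩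
        ((hu.contOn.mono fun q hq => hq.1.1).sub hvs.continuous.continuousOn)
      refine ⟨p, hp.1, ?_⟩
      rintro ⟨x, z⟩ ⟨hz1, hz2⟩
      have hzψ : ψ (Int.fract z) = ψ z := by
        have := hψ.periodic.sub_zsmul_eq (x := z) ⌊z⌋
        rwa [zsmul_one, Int.self_sub_floor] at this
      have hzu : u (x, Int.fract z) = u (x, z) := by
        have hper : Function.Periodic (fun z => u (x, z)) 1 := hu.periodic x
        have := hper.sub_zsmul_eq (x := z) ⌊z⌋
        rwa [zsmul_one, Int.self_sub_floor] at this
      have hmem : ((x, Int.fract z) : ℝ × ℝ) ∈ K ∩ {p | p.2 ∈ Icc (0:ℝ) 1} :=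
        ⟨⟨show x ≤ ψ (Int.fract z) by rw [hzψ]; exact hz1, hz2⟩,
          ⟨Int.fract_nonneg z, (Int.fract_lt_one z).le⟩⟩
      have h := hmin hmem
      change u p - v p ≤ u (x, Int.fract z) - v (x, Int.fract z) at h
      rw [hzu] at h
      exact h
    · intro p hp
      rcases lt_or_eq_of_le (show -1 ≤ p.1 from hp.2) with hlt | heq
      · right
        obtain ⟨h1, h2, h3⟩ := hder p (mem_univ p)
        have hE := mul_pos ha (Real.exp_pos (-(p.1 + 1)))
        refine ⟨hp.1, ?_, hvs.contDiffAt, ?_, fun _ => ?_⟩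
        · refine inter_mem self_mem_nhdsWithin (mem_nhdsWithin_of_mem_nhds ?_)
          filter_upwards [continuous_fst.continuousAt.eventually_const_lt hlt] with q hq
            using le_of_lt hq
        · rw [h1, h3]; nlinarith
        · rw [fderiv_apply_pair, h1, h2]; nlinarith
      · left
        obtain ⟨x, z⟩ := p
        simp only at heq
        subst heq
        simpa [hv] using hline z
  have := key (0, y) ⟨hψ0 y, show (-1:ℝ) ≤ 0 by norm_num⟩
  simpa [hv] using this

/-- **Uniform positive lower bound for the temperature at the rear of the front.**
Given a continuous `G : ℝ → ℝ` and `0 < c₀ ≤ c_M`, there is `α > 0` such that for every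
`c ∈ [c₀, c_M]`, every `ψ ∈ W^{2,∞}(𝕋)` with `|ψ''| ≤ G(ψ')` a.e. and `min_𝕋 ψ = 0`, and
every nonnegative classical solution `u` of the temperature problem for `(c,ψ)`, one has
`min_{y∈𝕋} u(0,y) ≥ α`. -/
theorem temperature_uniform_lower_bound
    (G : ℝ → ℝ) (hG : Continuous G) (c₀ cM : ℝ) (hc₀ : 0 < c₀) (hc₀M : c₀ ≤ cM) :
    ∃ α > 0, ∀ (c : ℝ) (ψ : ℝ → ℝ) (u : ℝ × ℝ → ℝ),
      c₀ ≤ c → c ≤ cM → W2infPer ψ →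
      (∀ᵐ y : ℝ, |deriv (deriv ψ) y| ≤ G (deriv ψ y)) →
      (∀ y : ℝ, 0 ≤ ψ y) → (∃ y : ℝ, ψ y = 0) →
      IsTempSol c ψ u → (∀ p ∈ OmegaCl ψ, 0 ≤ u p) →
      ∀ y : ℝ, α ≤ u (0, y) := by
  obtain ⟨S, hS⟩ := (isCompact_Icc (a := (-1:ℝ)) (b := 1)).exists_bound_of_continuousOn
    hG.continuousOn
  obtain ⟨M, hM1, hSM⟩ : ∃ M : ℝ, 1 ≤ M ∧ S < M :=
    ⟨max 1 (S + 1), le_max_left _ _, lt_of_lt_of_le (lt_add_one S) (le_max_right _ _)⟩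
  have hM0 : 0 < M := by linarith
  have hGM : ∀ s, |s| ≤ 1 → G s < M := fun s hs =>
    lt_of_le_of_lt ((le_abs_self _).trans (hS s (abs_le.1 hs))) hSM
  obtain ⟨b, hb⟩ : ∃ b, b = 1 / (4 * M ^ 2) := ⟨_, rfl⟩
  obtain ⟨l, hl⟩ : ∃ l, l = 16 * cM + 1 := ⟨_, rfl⟩
  obtain ⟨κ, hκ⟩ : ∃ κ, κ = c₀ * (b / 2) ^ 2 * Real.exp (-(l / (b / 2))) / (4 * l) := ⟨_, rfl⟩
  have hbpos : 0 < b := by rw [hb]; positivity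
  have hb4 : b ≤ 1 / 4 := by
    rw [hb, div_le_div_iff₀ (by positivity) (by norm_num)]; nlinarith
  have hlpos : 0 < l := by rw [hl]; linarith
  have hκpos : 0 < κ := by rw [hκ]; positivity
  have hα : 0 < κ * (Real.exp (l / 2) - Real.exp (l / 4)) :=
    mul_pos hκpos (sub_pos.2 (Real.exp_lt_exp.2 (by linarith)))
  refine ⟨_, mul_pos hα (Real.exp_pos (-1)), ?_⟩
  intro c ψ u hc hcM hψ hode hψ0 hex hu hpos
  obtain ⟨y₀, hy₀⟩ := hex
  have hcrit : deriv ψ y₀ = 0 := by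
    apply IsLocalMin.deriv_eq_zero
    exact Eventually.of_forall fun y => by rw [hy₀]; exact hψ0 y
  have hs := slope_bound G M hM0 hGM ψ hψ hode y₀ hcrit
  have hdisc := disc_bound hc₀ hc hcM hM1 hb hl hκ hψ hψ0 hy₀ hs hu hpos
  refine strip_bound (hc₀.trans_le hc) hα hψ hψ0 hu fun y => ?_
  -- shift `y` by an integer into the period centred at the minimum point of the front
  set z := y - round (y - y₀) with hz
  have huz : u (-1, z) = u (-1, y) := by
    have hper : Function.Periodic (fun z => u (-1, z)) 1 := hu.periodic (-1)
    have := hper.sub_zsmul_eq (x := y) (round (y - y₀))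
    simpa [hz] using this
  have hzy : |z - y₀| ≤ 1 / 2 := by
    have := abs_sub_round (y - y₀)
    rwa [show z - y₀ = y - y₀ - round (y - y₀) by rw [hz]; ring]
  have hzsq : (z - y₀) ^ 2 ≤ 1 / 4 := by
    have := sq_le_sq' (abs_le.1 hzy).1 (abs_le.1 hzy).2
    linarith
  have hD : (b - -1) ^ 2 + (z - y₀) ^ 2 ≤ 2 := by nlinarith
  have hDpos : 0 < (b - -1) ^ 2 + (z - y₀) ^ 2 := by nlinarith [sq_nonneg (z - y₀)]
  have h1 := hdisc (-1, z) ⟨show (-1:ℝ) ≤ ψ z by linarith [hψ0 z],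
    show (b - -1) ^ 2 + (z - y₀) ^ 2 ≤ 4 * (b - -1) by linarith⟩
  have hP : 1 / 2 ≤ poisson b y₀ (-1, z) := by
    change 1 / 2 ≤ (b - -1) / ((b - -1) ^ 2 + (z - y₀) ^ 2)
    rw [div_le_div_iff₀ (by norm_num) hDpos]; linarith
  rw [← huz]
  refine le_trans ?_ h1
  unfold barrier
  have : l / 2 ≤ l * poisson b y₀ (-1, z) := by nlinarith
  gcongr
end
end
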